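/- arXiv:1506.08520 — 2 statements merged into one kernel-verified Lean document; each statement's English description precedes it below -/
import Mathlib

section
/- Let (η, ϕ) be a smooth solution of the three-dimensional water-wave system on [0,T], and set A := 3∫₀ᵀ∬_Q η·∂ₜψ dx dt + 2g∫₀ᵀ∬_Q η² dx dt + (1/2)∫₀ᵀ∭_{Ω(t)} |∇_{x,y}ϕ|² dy dx dt. Then A = −(T/2)·𝓗 + (3/4)[∬_Q η ψ dx]ₜ₌₀^{t=T} − (9/8)∫₀ᵀ∬_Q η(t,x)·|∇ₓϕ(t,x,−h)|² dx dt + (9/4)∫₀ᵀ∭_{Ω(t)} (∂_yϕ)·(∇η·∇ₓϕ) dy dx dt, where 𝓗 := 𝓗(0) (the energy 𝓗(t) being independent of t) and [F(t)]ₜ₌₀^{t=T} denotes F(T) − F(0). -/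
open Real Set MeasureTheory

noncomputable section

/-- `∂_{x₁}ϕ(t,x₁,x₂,y)` -/
def phiX1 (ϕ : ℝ → ℝ → ℝ → ℝ → ℝ) (t x₁ x₂ y : ℝ) : ℝ := deriv (fun s => ϕ t s x₂ y) x₁

/-- `∂_{x₂}ϕ(t,x₁,x₂,y)` -/
def phiX2 (ϕ : ℝ → ℝ → ℝ → ℝ → ℝ) (t x₁ x₂ y : ℝ) : ℝ := deriv (fun s => ϕ t x₁ s y) x₂

/-- `∂_yϕ(t,x₁,x₂,y)` -/
def phiY3 (ϕ : ℝ → ℝ → ℝ → ℝ → ℝ) (t x₁ x₂ y : ℝ) : ℝ := deriv (fun s => ϕ t x₁ x₂ s) y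

/-- `∂ₜϕ(t,x₁,x₂,y)` -/
def phiT3 (ϕ : ℝ → ℝ → ℝ → ℝ → ℝ) (t x₁ x₂ y : ℝ) : ℝ := deriv (fun s => ϕ s x₁ x₂ y) t

/-- `|∇_{x,y}ϕ|²(t,x₁,x₂,y)` -/
def gradSq3 (ϕ : ℝ → ℝ → ℝ → ℝ → ℝ) (t x₁ x₂ y : ℝ) : ℝ :=
  (phiX1 ϕ t x₁ x₂ y) ^ 2 + (phiX2 ϕ t x₁ x₂ y) ^ 2 + (phiY3 ϕ t x₁ x₂ y) ^ 2

/-- `|∇ₓϕ|²(t,x₁,x₂,y)` (horizontal gradient) -/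
def gradXSq3 (ϕ : ℝ → ℝ → ℝ → ℝ → ℝ) (t x₁ x₂ y : ℝ) : ℝ :=
  (phiX1 ϕ t x₁ x₂ y) ^ 2 + (phiX2 ϕ t x₁ x₂ y) ^ 2

/-- `∂_{x₁}η(t,x₁,x₂)` -/
def etaX1 (η : ℝ → ℝ → ℝ → ℝ) (t x₁ x₂ : ℝ) : ℝ := deriv (fun s => η t s x₂) x₁

/-- `∂_{x₂}η(t,x₁,x₂)` -/
def etaX2 (η : ℝ → ℝ → ℝ → ℝ) (t x₁ x₂ : ℝ) : ℝ := deriv (fun s => η t x₁ s) x₂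

/-- `∂ₜη(t,x₁,x₂)` -/
def etaT3 (η : ℝ → ℝ → ℝ → ℝ) (t x₁ x₂ : ℝ) : ℝ := deriv (fun s => η s x₁ x₂) t

/-- the trace `ψ(t,x) = ϕ(t,x,η(t,x))` -/
def psi3 (η : ℝ → ℝ → ℝ → ℝ) (ϕ : ℝ → ℝ → ℝ → ℝ → ℝ) (t x₁ x₂ : ℝ) : ℝ :=
  ϕ t x₁ x₂ (η t x₁ x₂)

/-- `∂ₜψ(t,x₁,x₂)` -/
def psi3T (η : ℝ → ℝ → ℝ → ℝ) (ϕ : ℝ → ℝ → ℝ → ℝ → ℝ) (t x₁ x₂ : ℝ) : ℝ :=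
  deriv (fun s => psi3 η ϕ s x₁ x₂) t

/-- `∂_{x₁}ψ(t,x₁,x₂)` -/
def psi3X1 (η : ℝ → ℝ → ℝ → ℝ) (ϕ : ℝ → ℝ → ℝ → ℝ → ℝ) (t x₁ x₂ : ℝ) : ℝ :=
  deriv (fun s => psi3 η ϕ t s x₂) x₁

/-- `∂_{x₂}ψ(t,x₁,x₂)` -/
def psi3X2 (η : ℝ → ℝ → ℝ → ℝ) (ϕ : ℝ → ℝ → ℝ → ℝ → ℝ) (t x₁ x₂ : ℝ) : ℝ :=
  deriv (fun s => psi3 η ϕ t x₁ s) x₂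

/-- `Θ(t,x) = -η ∂ₜψ - (g/2) η²` -/
def Theta3 (g : ℝ) (η : ℝ → ℝ → ℝ → ℝ) (ϕ : ℝ → ℝ → ℝ → ℝ → ℝ) (t x₁ x₂ : ℝ) : ℝ :=
  -(η t x₁ x₂) * psi3T η ϕ t x₁ x₂ - g / 2 * (η t x₁ x₂) ^ 2

/-- the energy `𝓗(t)` -/
def energy3D (L₁ L₂ h g : ℝ) (η : ℝ → ℝ → ℝ → ℝ) (ϕ : ℝ → ℝ → ℝ → ℝ → ℝ) (t : ℝ) : ℝ :=
  g / 2 * (∫ x₁ in (0:ℝ)..L₁, ∫ x₂ in (0:ℝ)..L₂, (η t x₁ x₂) ^ 2)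
    + 1 / 2 * ∫ x₁ in (0:ℝ)..L₁, ∫ x₂ in (0:ℝ)..L₂, ∫ y in (-h)..(η t x₁ x₂),
        gradSq3 ϕ t x₁ x₂ y

/-- the boundary observation `𝓑(T)` -/
def bigB (L₁ L₂ g T : ℝ) (η : ℝ → ℝ → ℝ → ℝ) (ϕ : ℝ → ℝ → ℝ → ℝ → ℝ) : ℝ :=
  ∫ t in (0:ℝ)..T,
    (L₁ * (∫ x₂ in (0:ℝ)..L₂, Theta3 g η ϕ t L₁ x₂)
      + L₂ * ∫ x₁ in (0:ℝ)..L₁, Theta3 g η ϕ t x₁ L₂)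

/-- the positive boundary term `P` -/
def bigP (L₁ L₂ h T : ℝ) (η : ℝ → ℝ → ℝ → ℝ) (ϕ : ℝ → ℝ → ℝ → ℝ → ℝ) : ℝ :=
  1 / 2 * ∫ t in (0:ℝ)..T,
    (L₁ * (∫ x₂ in (0:ℝ)..L₂, ∫ y in (-h)..(η t L₁ x₂), gradSq3 ϕ t L₁ x₂ y)
      + L₂ * (∫ x₁ in (0:ℝ)..L₁, ∫ y in (-h)..(η t x₁ L₂), gradSq3 ϕ t x₁ L₂ y)
      + h * ∫ x₁ in (0:ℝ)..L₁, ∫ x₂ in (0:ℝ)..L₂, gradSq3 ϕ t x₁ x₂ (-h))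

/-- A smooth solution of the three-dimensional water-wave system on `[0,T]`,
in the tank over `Q = [0,L₁] × [0,L₂]`. -/
structure IsWW3D (L₁ L₂ h g T : ℝ) (η : ℝ → ℝ → ℝ → ℝ)
    (ϕ : ℝ → ℝ → ℝ → ℝ → ℝ) : Prop where
  smooth_eta : ContDiff ℝ (⊤ : ℕ∞) (fun p : ℝ × ℝ × ℝ => η p.1 p.2.1 p.2.2)
  smooth_phi : ContDiff ℝ (⊤ : ℕ∞) (fun p : ℝ × ℝ × ℝ × ℝ => ϕ p.1 p.2.1 p.2.2.1 p.2.2.2)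
  eta_lower : ∀ t ∈ Icc (0:ℝ) T, ∀ x₁ ∈ Icc (0:ℝ) L₁, ∀ x₂ ∈ Icc (0:ℝ) L₂,
    -h / 2 ≤ η t x₁ x₂
  eta_mean : ∀ t ∈ Icc (0:ℝ) T,
    (∫ x₁ in (0:ℝ)..L₁, ∫ x₂ in (0:ℝ)..L₂, η t x₁ x₂) = 0
  laplace : ∀ t ∈ Icc (0:ℝ) T, ∀ x₁ ∈ Icc (0:ℝ) L₁, ∀ x₂ ∈ Icc (0:ℝ) L₂,
    ∀ y ∈ Icc (-h) (η t x₁ x₂),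
      deriv (fun s => phiX1 ϕ t s x₂ y) x₁ + deriv (fun s => phiX2 ϕ t x₁ s y) x₂
        + deriv (fun s => phiY3 ϕ t x₁ x₂ s) y = 0
  bc_x1 : ∀ t ∈ Icc (0:ℝ) T, ∀ x₁ ∈ ({0, L₁} : Set ℝ), ∀ x₂ ∈ Icc (0:ℝ) L₂,
    ∀ y ∈ Icc (-h) (η t x₁ x₂), phiX1 ϕ t x₁ x₂ y = 0
  bc_x2 : ∀ t ∈ Icc (0:ℝ) T, ∀ x₂ ∈ ({0, L₂} : Set ℝ), ∀ x₁ ∈ Icc (0:ℝ) L₁,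
    ∀ y ∈ Icc (-h) (η t x₁ x₂), phiX2 ϕ t x₁ x₂ y = 0
  bc_bottom : ∀ t ∈ Icc (0:ℝ) T, ∀ x₁ ∈ Icc (0:ℝ) L₁, ∀ x₂ ∈ Icc (0:ℝ) L₂,
    phiY3 ϕ t x₁ x₂ (-h) = 0
  kinematic : ∀ t ∈ Icc (0:ℝ) T, ∀ x₁ ∈ Icc (0:ℝ) L₁, ∀ x₂ ∈ Icc (0:ℝ) L₂,
    etaT3 η t x₁ x₂
      = phiY3 ϕ t x₁ x₂ (η t x₁ x₂)
        - (etaX1 η t x₁ x₂ * phiX1 ϕ t x₁ x₂ (η t x₁ x₂)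
            + etaX2 η t x₁ x₂ * phiX2 ϕ t x₁ x₂ (η t x₁ x₂))
  bernoulli : ∀ t ∈ Icc (0:ℝ) T, ∀ x₁ ∈ Icc (0:ℝ) L₁, ∀ x₂ ∈ Icc (0:ℝ) L₂,
    phiT3 ϕ t x₁ x₂ (η t x₁ x₂)
      + 1 / 2 * ((phiX1 ϕ t x₁ x₂ (η t x₁ x₂)) ^ 2
          + (phiX2 ϕ t x₁ x₂ (η t x₁ x₂)) ^ 2 + (phiY3 ϕ t x₁ x₂ (η t x₁ x₂)) ^ 2)
      + g * η t x₁ x₂ = 0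
  etaX1_bc : ∀ t ∈ Icc (0:ℝ) T, ∀ x₁ ∈ ({0, L₁} : Set ℝ), ∀ x₂ ∈ Icc (0:ℝ) L₂,
    etaX1 η t x₁ x₂ = 0
  etaX2_bc : ∀ t ∈ Icc (0:ℝ) T, ∀ x₂ ∈ ({0, L₂} : Set ℝ), ∀ x₁ ∈ Icc (0:ℝ) L₁,
    etaX2 η t x₁ x₂ = 0

lemma swap_cont (F : ℝ × ℝ → ℝ) (hF : Continuous F) (a b c d : ℝ) :
    (∫ x in a..b, ∫ y in c..d, F (x, y)) = ∫ y in c..d, ∫ x in a..b, F (x, y) := by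
  apply MeasureTheory.intervalIntegral_intervalIntegral_swap
  have h : IntegrableOn F (uIcc a b ×ˢ uIcc c d) :=
    hF.continuousOn.integrableOn_compact (isCompact_uIcc.prod isCompact_uIcc)
  exact h.mono_set (Set.prod_mono uIoc_subset_uIcc uIoc_subset_uIcc)

lemma hasDeriv_param (F Fs : ℝ × ℝ → ℝ) (hF : Continuous F) (hFs : Continuous Fs)
    (hd : ∀ s y, HasDerivAt (fun s => F (s, y)) (Fs (s, y)) s) (c z s₀ : ℝ) :
    HasDerivAt (fun s => ∫ y in c..z, F (s, y)) (∫ y in c..z, Fs (s₀, y)) s₀ := by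
  have key : ∀ s, (∫ y in c..z, F (s, y))
      = (∫ y in c..z, F (s₀, y)) + ∫ u in s₀..s, ∫ y in c..z, Fs (u, y) := by
    intro s
    rw [swap_cont Fs hFs]
    have : ∀ y, (∫ u in s₀..s, Fs (u, y)) = F (s, y) - F (s₀, y) := fun y =>
      intervalIntegral.integral_eq_sub_of_hasDerivAt (fun u _ => hd u y)
        (Continuous.intervalIntegrable (by fun_prop) _ _)
    simp_rw [this]
    rw [intervalIntegral.integral_sub (Continuous.intervalIntegrable (by fun_prop) _ _)
      (Continuous.intervalIntegrable (by fun_prop) _ _)]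
    ring
  rw [funext key]
  have hc : Continuous fun u => ∫ y in c..z, Fs (u, y) := by fun_prop
  exact (hc.integral_hasStrictDerivAt s₀ s₀).hasDerivAt.const_add _

lemma hasDeriv_leib (F Fs : ℝ × ℝ → ℝ) (hF : Continuous F) (hFs : Continuous Fs)
    (hd : ∀ s y, HasDerivAt (fun s => F (s, y)) (Fs (s, y)) s) (e e' : ℝ → ℝ)
    (he : ∀ s, HasDerivAt e (e' s) s) (c s₀ : ℝ) :
    HasDerivAt (fun s => ∫ y in c..e s, F (s, y))
      ((∫ y in c..e s₀, Fs (s₀, y)) + F (s₀, e s₀) * e' s₀) s₀ := by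
  have h := hasStrictFDerivAt_uncurry_coprod (𝕜 := ℝ) (u := (s₀, e s₀))
    (f := fun s z => ∫ y in c..z, F (s, y))
    (f₁ := fun s z => ContinuousLinearMap.toSpanSingleton ℝ (∫ y in c..z, Fs (s, y)))
    (f₂ := fun s z => ContinuousLinearMap.toSpanSingleton ℝ (F (s, z)))
    (Filter.Eventually.of_forall fun v => (hasDeriv_param F Fs hF hFs hd c v.2 v.1).hasFDerivAt)
    (Filter.Eventually.of_forall fun v => by
      have hc : Continuous fun u => F (v.1, u) := by fun_prop
      exact (hc.integral_hasStrictDerivAt c v.2).hasDerivAt.hasFDerivAt)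
    (by
      apply Continuous.continuousAt
      have : Continuous fun p : ℝ × ℝ => ∫ y in c..p.2, Fs (p.1, y) := by fun_prop
      exact (ContinuousLinearMap.toSpanSingletonCLE (𝕜 := ℝ) (E := ℝ)).continuous.comp this)
    (by
      apply Continuous.continuousAt
      exact (ContinuousLinearMap.toSpanSingletonCLE (𝕜 := ℝ) (E := ℝ)).continuous.comp hF)
  have h2 := h.hasFDerivAt.comp_hasDerivAt_of_eq s₀ ((hasDerivAt_id s₀).prodMk (he s₀)) rfl
  refine HasDerivAt.congr_deriv h2 ?_
  simp [Function.HasUncurry.uncurry]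
  ring

lemma ftc_leib (F Fs : ℝ × ℝ → ℝ) (hF : Continuous F) (hFs : Continuous Fs)
    (hd : ∀ s y, HasDerivAt (fun s => F (s, y)) (Fs (s, y)) s) (e e' : ℝ → ℝ)
    (he : ∀ s, HasDerivAt e (e' s) s) (he' : Continuous e') (c a b : ℝ) :
    (∫ s in a..b, ((∫ y in c..e s, Fs (s, y)) + F (s, e s) * e' s))
      = (∫ y in c..e b, F (b, y)) - ∫ y in c..e a, F (a, y) := by
  have hec : Continuous e := continuous_iff_continuousAt.2 fun s => (he s).continuousAt
  apply intervalIntegral.integral_eq_sub_of_hasDerivAt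
    (fun s _ => hasDeriv_leib F Fs hF hFs hd e e' he c s)
  apply Continuous.intervalIntegrable
  fun_prop

lemma flux2 (F Fs : ℝ × ℝ × ℝ → ℝ) (hF : Continuous F) (hFs : Continuous Fs)
    (hd : ∀ x s y, HasDerivAt (fun s => F (x, s, y)) (Fs (x, s, y)) s) (e e' : ℝ × ℝ → ℝ)
    (he : ∀ x s, HasDerivAt (fun s => e (x, s)) (e' (x, s)) s) (he' : Continuous e')
    (c L₁ L₂ : ℝ) (hL₁ : 0 < L₁)
    (h0 : ∀ x ∈ Icc 0 L₁, ∫ y in c..e (x, 0), F (x, 0, y) = 0)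
    (h1 : ∀ x ∈ Icc 0 L₁, ∫ y in c..e (x, L₂), F (x, L₂, y) = 0) :
    (∫ x in (0:ℝ)..L₁, ∫ s in (0:ℝ)..L₂,
      ((∫ y in c..e (x, s), Fs (x, s, y)) + F (x, s, e (x, s)) * e' (x, s))) = 0 := by
  refine Eq.trans (intervalIntegral.integral_congr (g := fun _ => (0:ℝ)) ?_)
    intervalIntegral.integral_zero
  intro x hx
  rw [uIcc_of_le hL₁.le] at hx
  have := ftc_leib (fun p => F (x, p)) (fun p => Fs (x, p)) (by fun_prop) (by fun_prop)
    (hd x) (fun s => e (x, s)) (fun s => e' (x, s)) (he x) (by fun_prop) c 0 L₂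
  dsimp only at this ⊢
  rw [this, h0 x hx, h1 x hx, sub_zero]

lemma flux1 (F Fs : ℝ × ℝ × ℝ → ℝ) (hF : Continuous F) (hFs : Continuous Fs)
    (hd : ∀ s x y, HasDerivAt (fun s => F (s, x, y)) (Fs (s, x, y)) s) (e e' : ℝ × ℝ → ℝ)
    (he : ∀ s x, HasDerivAt (fun s => e (s, x)) (e' (s, x)) s) (he' : Continuous e')
    (hec : Continuous e)
    (c L₁ L₂ : ℝ) (hL₂ : 0 < L₂)
    (h0 : ∀ x ∈ Icc 0 L₂, ∫ y in c..e (0, x), F (0, x, y) = 0)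
    (h1 : ∀ x ∈ Icc 0 L₂, ∫ y in c..e (L₁, x), F (L₁, x, y) = 0) :
    (∫ s in (0:ℝ)..L₁, ∫ x in (0:ℝ)..L₂,
      ((∫ y in c..e (s, x), Fs (s, x, y)) + F (s, x, e (s, x)) * e' (s, x))) = 0 := by
  rw [swap_cont (fun p => (∫ y in c..e (p.1, p.2), Fs (p.1, p.2, y))
    + F (p.1, p.2, e (p.1, p.2)) * e' (p.1, p.2)) (by fun_prop)]
  exact flux2 (fun p => F (p.2.1, p.1, p.2.2)) (fun p => Fs (p.2.1, p.1, p.2.2))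
    (by fun_prop) (by fun_prop) (fun x s y => hd s x y) (fun p => e (p.2, p.1))
    (fun p => e' (p.2, p.1)) (fun x s => he s x) (by fun_prop) c L₂ L₁ hL₂ h0 h1

/-- time FTC, with Fubini -/
lemma time_ftc (f f' : ℝ × ℝ × ℝ → ℝ) (hf : Continuous f) (hf' : Continuous f')
    (hd : ∀ t x y, HasDerivAt (fun s => f (s, x, y)) (f' (t, x, y)) t) (L₁ L₂ t : ℝ) :
    (∫ x in (0:ℝ)..L₁, ∫ y in (0:ℝ)..L₂, f (t, x, y))
      - (∫ x in (0:ℝ)..L₁, ∫ y in (0:ℝ)..L₂, f (0, x, y))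
      = ∫ s in (0:ℝ)..t, ∫ x in (0:ℝ)..L₁, ∫ y in (0:ℝ)..L₂, f' (s, x, y) := by
  rw [swap_cont (fun p => ∫ y in (0:ℝ)..L₂, f' (p.1, p.2, y)) (by fun_prop),
    ← intervalIntegral.integral_sub (Continuous.intervalIntegrable (by fun_prop) _ _)
      (Continuous.intervalIntegrable (by fun_prop) _ _)]
  congr 1; ext x
  rw [swap_cont (fun p => f' (p.1, x, p.2)) (by fun_prop),
    ← intervalIntegral.integral_sub (Continuous.intervalIntegrable (by fun_prop) _ _)
      (Continuous.intervalIntegrable (by fun_prop) _ _)]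
  congr 1; ext y
  exact (intervalIntegral.integral_eq_sub_of_hasDerivAt (fun u _ => hd u x y)
        (Continuous.intervalIntegrable (by fun_prop) _ _)).symm

lemma int_zero {F : ℝ → ℝ} {c d : ℝ} (hcd : c ≤ d) (h : ∀ y ∈ Icc c d, F y = 0) :
    ∫ y in c..d, F y = 0 := by
  refine Eq.trans (intervalIntegral.integral_congr (g := fun _ => (0:ℝ)) ?_)
    intervalIntegral.integral_zero
  intro y hy
  rw [uIcc_of_le hcd] at hy
  exact h y hy

lemma int2_congr {U V : ℝ → ℝ → ℝ} {L₁ L₂ : ℝ} (hL₁ : 0 < L₁) (hL₂ : 0 < L₂)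
    (h : ∀ x ∈ Icc 0 L₁, ∀ y ∈ Icc 0 L₂, U x y = V x y) :
    (∫ x in (0:ℝ)..L₁, ∫ y in (0:ℝ)..L₂, U x y) = ∫ x in (0:ℝ)..L₁, ∫ y in (0:ℝ)..L₂, V x y := by
  apply intervalIntegral.integral_congr
  intro x hx
  rw [uIcc_of_le hL₁.le] at hx
  apply intervalIntegral.integral_congr
  intro y hy
  rw [uIcc_of_le hL₂.le] at hy
  exact h x hx y hy

lemma int2_add (U V : ℝ × ℝ → ℝ) (hU : Continuous U) (hV : Continuous V) (L₁ L₂ : ℝ) :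
    (∫ x in (0:ℝ)..L₁, ∫ y in (0:ℝ)..L₂, (U (x, y) + V (x, y)))
      = (∫ x in (0:ℝ)..L₁, ∫ y in (0:ℝ)..L₂, U (x, y))
        + ∫ x in (0:ℝ)..L₁, ∫ y in (0:ℝ)..L₂, V (x, y) := by
  rw [← intervalIntegral.integral_add (Continuous.intervalIntegrable (by fun_prop) _ _)
      (Continuous.intervalIntegrable (by fun_prop) _ _)]
  congr 1; ext x
  rw [← intervalIntegral.integral_add (Continuous.intervalIntegrable (by fun_prop) _ _)
      (Continuous.intervalIntegrable (by fun_prop) _ _)]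

lemma int2_smul (U : ℝ × ℝ → ℝ) (k : ℝ) (L₁ L₂ : ℝ) :
    (∫ x in (0:ℝ)..L₁, ∫ y in (0:ℝ)..L₂, (k * U (x, y)))
      = k * (∫ x in (0:ℝ)..L₁, ∫ y in (0:ℝ)..L₂, U (x, y)) := by
  simp only [intervalIntegral.integral_const_mul]

lemma div_id (A A1 B B2 : ℝ × ℝ × ℝ → ℝ) (hA : Continuous A) (hA1 : Continuous A1)
    (hB : Continuous B) (hB2 : Continuous B2)
    (dA : ∀ s x y, HasDerivAt (fun s => A (s, x, y)) (A1 (s, x, y)) s)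
    (dB : ∀ x s y, HasDerivAt (fun s => B (x, s, y)) (B2 (x, s, y)) s)
    (e e1 e2 : ℝ × ℝ → ℝ) (hec : Continuous e) (he1 : Continuous e1) (he2 : Continuous e2)
    (de1 : ∀ s x, HasDerivAt (fun s => e (s, x)) (e1 (s, x)) s)
    (de2 : ∀ x s, HasDerivAt (fun s => e (x, s)) (e2 (x, s)) s)
    (c L₁ L₂ : ℝ) (hL₁ : 0 < L₁) (hL₂ : 0 < L₂)
    (hce : ∀ x ∈ Icc 0 L₁, ∀ y ∈ Icc 0 L₂, c ≤ e (x, y))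
    (A0 : ∀ s ∈ ({0, L₁} : Set ℝ), ∀ x ∈ Icc 0 L₂, ∀ y ∈ Icc c (e (s, x)), A (s, x, y) = 0)
    (B0 : ∀ s ∈ ({0, L₂} : Set ℝ), ∀ x ∈ Icc 0 L₁, ∀ y ∈ Icc c (e (x, s)), B (x, s, y) = 0)
    (U V : ℝ × ℝ → ℝ) (hV : Continuous V)
    (hUV : ∀ x ∈ Icc 0 L₁, ∀ z ∈ Icc 0 L₂, U (x, z) = V (x, z)
      + (((∫ y in c..e (x, z), A1 (x, z, y)) + A (x, z, e (x, z)) * e1 (x, z))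
      + ((∫ y in c..e (x, z), B2 (x, z, y)) + B (x, z, e (x, z)) * e2 (x, z)))) :
    (∫ x in (0:ℝ)..L₁, ∫ z in (0:ℝ)..L₂, U (x, z))
      = ∫ x in (0:ℝ)..L₁, ∫ z in (0:ℝ)..L₂, V (x, z) := by
  have z1 : (0:ℝ) ∈ Icc 0 L₁ := ⟨le_rfl, hL₁.le⟩
  have z2 : (0:ℝ) ∈ Icc 0 L₂ := ⟨le_rfl, hL₂.le⟩
  have w1 : L₁ ∈ Icc 0 L₁ := ⟨hL₁.le, le_rfl⟩
  have w2 : L₂ ∈ Icc 0 L₂ := ⟨hL₂.le, le_rfl⟩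
  have f1 := flux1 A A1 hA hA1 dA e e1 de1 he1 hec c L₁ L₂ hL₂
    (fun x hx => int_zero (hce _ z1 _ hx) (A0 0 (by simp) x hx))
    (fun x hx => int_zero (hce _ w1 _ hx) (A0 L₁ (by simp) x hx))
  have f2 := flux2 B B2 hB hB2 dB e e2 de2 he2 c L₁ L₂ hL₁
    (fun x hx => int_zero (hce _ hx _ z2) (B0 0 (by simp) x hx))
    (fun x hx => int_zero (hce _ hx _ w2) (B0 L₂ (by simp) x hx))
  rw [int2_congr hL₁ hL₂ hUV]
  rw [int2_add V (fun p => (((∫ y in c..e (p.1, p.2), A1 (p.1, p.2, y))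
        + A (p.1, p.2, e (p.1, p.2)) * e1 (p.1, p.2))
      + ((∫ y in c..e (p.1, p.2), B2 (p.1, p.2, y)) + B (p.1, p.2, e (p.1, p.2)) * e2 (p.1, p.2))))
      hV (by fun_prop)]
  rw [int2_add (fun p => ((∫ y in c..e (p.1, p.2), A1 (p.1, p.2, y))
        + A (p.1, p.2, e (p.1, p.2)) * e1 (p.1, p.2)))
      (fun p => ((∫ y in c..e (p.1, p.2), B2 (p.1, p.2, y))
        + B (p.1, p.2, e (p.1, p.2)) * e2 (p.1, p.2)))
      (by fun_prop) (by fun_prop)]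
  rw [f1, f2]
  ring

lemma green (f f1 f2 fy p1 p2 py p11 p22 pyy : ℝ × ℝ × ℝ → ℝ)
    (hf : Continuous f) (hf1 : Continuous f1) (hf2 : Continuous f2) (hfy : Continuous fy)
    (hp1 : Continuous p1) (hp2 : Continuous p2) (hpy : Continuous py)
    (hp11 : Continuous p11) (hp22 : Continuous p22) (hpyy : Continuous pyy)
    (df1 : ∀ s x y, HasDerivAt (fun s => f (s, x, y)) (f1 (s, x, y)) s)
    (df2 : ∀ x s y, HasDerivAt (fun s => f (x, s, y)) (f2 (x, s, y)) s)
    (dfy : ∀ x y s, HasDerivAt (fun s => f (x, y, s)) (fy (x, y, s)) s)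
    (dp1 : ∀ s x y, HasDerivAt (fun s => p1 (s, x, y)) (p11 (s, x, y)) s)
    (dp2 : ∀ x s y, HasDerivAt (fun s => p2 (x, s, y)) (p22 (x, s, y)) s)
    (dpy : ∀ x y s, HasDerivAt (fun s => py (x, y, s)) (pyy (x, y, s)) s)
    (e e1 e2 et : ℝ × ℝ → ℝ) (hec : Continuous e) (he1 : Continuous e1) (he2 : Continuous e2)
    (het : Continuous et)
    (de1 : ∀ s x, HasDerivAt (fun s => e (s, x)) (e1 (s, x)) s)
    (de2 : ∀ x s, HasDerivAt (fun s => e (x, s)) (e2 (x, s)) s)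
    (c L₁ L₂ : ℝ) (hL₁ : 0 < L₁) (hL₂ : 0 < L₂)
    (hce : ∀ x ∈ Icc 0 L₁, ∀ y ∈ Icc 0 L₂, c ≤ e (x, y))
    (b1 : ∀ s ∈ ({0, L₁} : Set ℝ), ∀ x ∈ Icc 0 L₂, ∀ y ∈ Icc c (e (s, x)), p1 (s, x, y) = 0)
    (b2 : ∀ s ∈ ({0, L₂} : Set ℝ), ∀ x ∈ Icc 0 L₁, ∀ y ∈ Icc c (e (x, s)), p2 (x, s, y) = 0)
    (bb : ∀ x ∈ Icc 0 L₁, ∀ y ∈ Icc 0 L₂, py (x, y, c) = 0)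
    (lap : ∀ x ∈ Icc 0 L₁, ∀ z ∈ Icc 0 L₂, ∀ y ∈ Icc c (e (x, z)),
      p11 (x, z, y) + p22 (x, z, y) + pyy (x, z, y) = 0)
    (kin : ∀ x ∈ Icc 0 L₁, ∀ z ∈ Icc 0 L₂, et (x, z) = py (x, z, e (x, z))
      - (e1 (x, z) * p1 (x, z, e (x, z)) + e2 (x, z) * p2 (x, z, e (x, z)))) :
    (∫ x in (0:ℝ)..L₁, ∫ z in (0:ℝ)..L₂, ∫ y in c..e (x, z),
        (f1 (x, z, y) * p1 (x, z, y) + f2 (x, z, y) * p2 (x, z, y) + fy (x, z, y) * py (x, z, y)))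
      = ∫ x in (0:ℝ)..L₁, ∫ z in (0:ℝ)..L₂, f (x, z, e (x, z)) * et (x, z) := by
  refine div_id (fun q => f q * p1 q) (fun q => f1 q * p1 q + f q * p11 q)
    (fun q => f q * p2 q) (fun q => f2 q * p2 q + f q * p22 q)
    (by fun_prop) (by fun_prop) (by fun_prop) (by fun_prop)
    (fun s x y => (df1 s x y).mul (dp1 s x y)) (fun x s y => (df2 x s y).mul (dp2 x s y))
    e e1 e2 hec he1 he2 de1 de2 c L₁ L₂ hL₁ hL₂ hce
    (fun s hs x hx y hy => by simp [b1 s hs x hx y hy])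
    (fun s hs x hx y hy => by simp [b2 s hs x hx y hy])
    (fun p => ∫ y in c..e p, (f1 (p.1, p.2, y) * p1 (p.1, p.2, y)
      + f2 (p.1, p.2, y) * p2 (p.1, p.2, y) + fy (p.1, p.2, y) * py (p.1, p.2, y)))
    (fun p => f (p.1, p.2, e (p.1, p.2)) * et p) (by fun_prop) ?_
  intro x hx z hz
  dsimp only
  have h1 : (∫ y in c..e (x, z), (fy (x, z, y) * py (x, z, y) + f (x, z, y) * pyy (x, z, y)))
      = f (x, z, e (x, z)) * py (x, z, e (x, z)) := by
    rw [intervalIntegral.integral_eq_sub_of_hasDerivAt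
      (fun y _ => (dfy x z y).mul (dpy x z y)) (Continuous.intervalIntegrable (by fun_prop) _ _)]
    simp [bb x hx z hz]
  have h2 : (∫ y in c..e (x, z), (f1 (x, z, y) * p1 (x, z, y)
      + f2 (x, z, y) * p2 (x, z, y) + fy (x, z, y) * py (x, z, y)))
      = ∫ y in c..e (x, z), ((fy (x, z, y) * py (x, z, y) + f (x, z, y) * pyy (x, z, y))
      + ((f1 (x, z, y) * p1 (x, z, y) + f (x, z, y) * p11 (x, z, y))
      + (f2 (x, z, y) * p2 (x, z, y) + f (x, z, y) * p22 (x, z, y)))) := by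
    apply intervalIntegral.integral_congr
    intro y hy
    rw [uIcc_of_le (hce x hx z hz)] at hy
    dsimp only
    linear_combination (-f (x, z, y)) * lap x hx z hz y hy
  rw [h2, intervalIntegral.integral_add (Continuous.intervalIntegrable (by fun_prop) _ _)
    (Continuous.intervalIntegrable (by fun_prop) _ _), h1,
    intervalIntegral.integral_add (Continuous.intervalIntegrable (by fun_prop) _ _)
    (Continuous.intervalIntegrable (by fun_prop) _ _), kin x hx z hz]
  ring

lemma surf_id (p1 p2 py p11 p22 pyy p1y p2y : ℝ × ℝ × ℝ → ℝ)
    (hp1 : Continuous p1) (hp2 : Continuous p2) (hpy : Continuous py)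
    (hp11 : Continuous p11) (hp22 : Continuous p22) (hpyy : Continuous pyy)
    (hp1y : Continuous p1y) (hp2y : Continuous p2y)
    (dp1 : ∀ s x y, HasDerivAt (fun s => p1 (s, x, y)) (p11 (s, x, y)) s)
    (dp2 : ∀ x s y, HasDerivAt (fun s => p2 (x, s, y)) (p22 (x, s, y)) s)
    (dpy : ∀ x y s, HasDerivAt (fun s => py (x, y, s)) (pyy (x, y, s)) s)
    (dp1y : ∀ x y s, HasDerivAt (fun s => p1 (x, y, s)) (p1y (x, y, s)) s)
    (dp2y : ∀ x y s, HasDerivAt (fun s => p2 (x, y, s)) (p2y (x, y, s)) s)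
    (dpy1 : ∀ s x y, HasDerivAt (fun s => py (s, x, y)) (p1y (s, x, y)) s)
    (dpy2 : ∀ x s y, HasDerivAt (fun s => py (x, s, y)) (p2y (x, s, y)) s)
    (e e1 e2 : ℝ × ℝ → ℝ) (hec : Continuous e) (he1 : Continuous e1) (he2 : Continuous e2)
    (de1 : ∀ s x, HasDerivAt (fun s => e (s, x)) (e1 (s, x)) s)
    (de2 : ∀ x s, HasDerivAt (fun s => e (x, s)) (e2 (x, s)) s)
    (c L₁ L₂ : ℝ) (hL₁ : 0 < L₁) (hL₂ : 0 < L₂)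
    (hce : ∀ x ∈ Icc 0 L₁, ∀ y ∈ Icc 0 L₂, c ≤ e (x, y))
    (b1 : ∀ s ∈ ({0, L₁} : Set ℝ), ∀ x ∈ Icc 0 L₂, ∀ y ∈ Icc c (e (s, x)), p1 (s, x, y) = 0)
    (b2 : ∀ s ∈ ({0, L₂} : Set ℝ), ∀ x ∈ Icc 0 L₁, ∀ y ∈ Icc c (e (x, s)), p2 (x, s, y) = 0)
    (bb : ∀ x ∈ Icc 0 L₁, ∀ y ∈ Icc 0 L₂, py (x, y, c) = 0)
    (lap : ∀ x ∈ Icc 0 L₁, ∀ z ∈ Icc 0 L₂, ∀ y ∈ Icc c (e (x, z)),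
      p11 (x, z, y) + p22 (x, z, y) + pyy (x, z, y) = 0) :
    (∫ x in (0:ℝ)..L₁, ∫ z in (0:ℝ)..L₂, (e (x, z) * (1 / 2 * (p1 (x, z, e (x, z)) ^ 2
          + p2 (x, z, e (x, z)) ^ 2 - py (x, z, e (x, z)) ^ 2)
          + py (x, z, e (x, z)) * (e1 (x, z) * p1 (x, z, e (x, z))
            + e2 (x, z) * p2 (x, z, e (x, z))))))
      = ∫ x in (0:ℝ)..L₁, ∫ z in (0:ℝ)..L₂,
        (1 / 2 * (e (x, z) * (p1 (x, z, c) ^ 2 + p2 (x, z, c) ^ 2))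
          + (-1) * ∫ y in c..e (x, z), py (x, z, y)
            * (e1 (x, z) * p1 (x, z, y) + e2 (x, z) * p2 (x, z, y))) := by
  refine div_id (fun q => e (q.1, q.2.1) * (py q * p1 q))
    (fun q => e1 (q.1, q.2.1) * (py q * p1 q) + e (q.1, q.2.1) * (p1y q * p1 q + py q * p11 q))
    (fun q => e (q.1, q.2.1) * (py q * p2 q))
    (fun q => e2 (q.1, q.2.1) * (py q * p2 q) + e (q.1, q.2.1) * (p2y q * p2 q + py q * p22 q))
    (by fun_prop) (by fun_prop) (by fun_prop) (by fun_prop)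
    (fun s x y => (de1 s x).mul ((dpy1 s x y).mul (dp1 s x y)))
    (fun x s y => (de2 x s).mul ((dpy2 x s y).mul (dp2 x s y)))
    e e1 e2 hec he1 he2 de1 de2 c L₁ L₂ hL₁ hL₂ hce
    (fun s hs x hx y hy => by simp [b1 s hs x hx y hy])
    (fun s hs x hx y hy => by simp [b2 s hs x hx y hy])
    (fun p => (e p * (1 / 2 * (p1 (p.1, p.2, e p) ^ 2
          + p2 (p.1, p.2, e p) ^ 2 - py (p.1, p.2, e p) ^ 2)
          + py (p.1, p.2, e p) * (e1 p * p1 (p.1, p.2, e p)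
            + e2 p * p2 (p.1, p.2, e p)))))
    (fun p => (1 / 2 * (e p * (p1 (p.1, p.2, c) ^ 2 + p2 (p.1, p.2, c) ^ 2))
          + (-1) * ∫ y in c..e p, py (p.1, p.2, y)
            * (e1 p * p1 (p.1, p.2, y) + e2 p * p2 (p.1, p.2, y)))) (by fun_prop) ?_
  intro x hx z hz
  dsimp only
  have h1 : (∫ y in c..e (x, z), e (x, z) * (p1 (x, z, y) * p1y (x, z, y)
        + p2 (x, z, y) * p2y (x, z, y) - py (x, z, y) * pyy (x, z, y)))
      = e (x, z) * (1 / 2 * (p1 (x, z, e (x, z)) ^ 2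
          + p2 (x, z, e (x, z)) ^ 2 - py (x, z, e (x, z)) ^ 2))
        - e (x, z) * (1 / 2 * (p1 (x, z, c) ^ 2 + p2 (x, z, c) ^ 2)) := by
    rw [intervalIntegral.integral_const_mul, intervalIntegral.integral_eq_sub_of_hasDerivAt
      (f := fun y => 1 / 2 * (p1 (x, z, y) ^ 2 + p2 (x, z, y) ^ 2 - py (x, z, y) ^ 2)) ?_
      (Continuous.intervalIntegrable (by fun_prop) _ _)]
    · rw [bb x hx z hz]; ring
    · intro y _
      refine (((((dp1y x z y).pow 2).add ((dp2y x z y).pow 2)).sub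
        ((dpy x z y).pow 2)).const_mul (1 / 2)).congr_deriv ?_
      push_cast
      ring
  have h2 : (∫ y in c..e (x, z), (e1 (x, z) * (py (x, z, y) * p1 (x, z, y))
        + e (x, z) * (p1y (x, z, y) * p1 (x, z, y) + py (x, z, y) * p11 (x, z, y))))
      + (∫ y in c..e (x, z), (e2 (x, z) * (py (x, z, y) * p2 (x, z, y))
        + e (x, z) * (p2y (x, z, y) * p2 (x, z, y) + py (x, z, y) * p22 (x, z, y))))
      = (∫ y in c..e (x, z), e (x, z) * (p1 (x, z, y) * p1y (x, z, y)
        + p2 (x, z, y) * p2y (x, z, y) - py (x, z, y) * pyy (x, z, y)))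
        + ∫ y in c..e (x, z), py (x, z, y)
            * (e1 (x, z) * p1 (x, z, y) + e2 (x, z) * p2 (x, z, y)) := by
    rw [← intervalIntegral.integral_add (Continuous.intervalIntegrable (by fun_prop) _ _)
      (Continuous.intervalIntegrable (by fun_prop) _ _),
      ← intervalIntegral.integral_add (Continuous.intervalIntegrable (by fun_prop) _ _)
      (Continuous.intervalIntegrable (by fun_prop) _ _)]
    apply intervalIntegral.integral_congr
    intro y hy
    rw [uIcc_of_le (hce x hx z hz)] at hy
    dsimp only
    linear_combination (e (x, z) * py (x, z, y)) * lap x hx z hz y hy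
  linear_combination -h2 - h1

lemma final_comb (a V K B C : ℝ → ℝ) (g T H S : ℝ) (hT : 0 < T)
    (ha : Continuous a) (hV : Continuous V) (hK : Continuous K) (hB : Continuous B)
    (hC : Continuous C)
    (E1 : ∀ t ∈ Icc 0 T, a t = -g * V t - 1 / 2 * B t + C t)
    (E3 : ∀ t ∈ Icc 0 T, g / 2 * V t + 1 / 2 * K t = H)
    (E4 : S = ∫ t in (0:ℝ)..T, (K t + a t)) :
    3 * (∫ t in (0:ℝ)..T, a t) + 2 * g * (∫ t in (0:ℝ)..T, V t)
      + 1 / 2 * (∫ t in (0:ℝ)..T, K t)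
      = -(T / 2) * H + 3 / 4 * S - 9 / 8 * (∫ t in (0:ℝ)..T, B t)
        + 9 / 4 * ∫ t in (0:ℝ)..T, C t := by
  have i : ∀ f : ℝ → ℝ, Continuous f → IntervalIntegrable f volume 0 T :=
    fun f hf => hf.intervalIntegrable _ _
  have F1 : (∫ t in (0:ℝ)..T, a t) = -g * (∫ t in (0:ℝ)..T, V t)
      - 1 / 2 * (∫ t in (0:ℝ)..T, B t) + ∫ t in (0:ℝ)..T, C t := by
    rw [intervalIntegral.integral_congr (g := fun t => -g * V t - 1 / 2 * B t + C t),
      intervalIntegral.integral_add (i _ (by fun_prop)) (i _ (by fun_prop)),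
      intervalIntegral.integral_sub (i _ (by fun_prop)) (i _ (by fun_prop)),
      intervalIntegral.integral_const_mul, intervalIntegral.integral_const_mul]
    intro t ht
    rw [uIcc_of_le hT.le] at ht
    exact E1 t ht
  have F3 : g / 2 * (∫ t in (0:ℝ)..T, V t) + 1 / 2 * (∫ t in (0:ℝ)..T, K t) = T * H := by
    rw [← intervalIntegral.integral_const_mul, ← intervalIntegral.integral_const_mul,
      ← intervalIntegral.integral_add (i _ (by fun_prop)) (i _ (by fun_prop)),
      intervalIntegral.integral_congr (g := fun t => H)]
    · simp
    intro t ht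
    rw [uIcc_of_le hT.le] at ht
    exact E3 t ht
  rw [intervalIntegral.integral_add (i _ hK) (i _ ha)] at E4
  rw [E4]
  linear_combination (9 / 4) * F1 - (1 / 2) * F3

/-- directional derivative -/
def dd {E : Type*} [NormedAddCommGroup E] [NormedSpace ℝ E] (v : E) (F : E → ℝ) : E → ℝ :=
  fun p => fderiv ℝ F p v

lemma dd_smooth {E : Type*} [NormedAddCommGroup E] [NormedSpace ℝ E] (v : E) (F : E → ℝ)
    (hF : ContDiff ℝ (⊤ : ℕ∞) F) : ContDiff ℝ (⊤ : ℕ∞) (dd v F) := by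
  unfold dd
  exact (hF.fderiv_right (m := (⊤ : ℕ∞)) (by simp)).clm_apply contDiff_const

lemma dd_comm {E : Type*} [NormedAddCommGroup E] [NormedSpace ℝ E] (v w : E) (F : E → ℝ)
    (hF : ContDiff ℝ (⊤ : ℕ∞) F) : dd v (dd w F) = dd w (dd v F) := by
  have h2 : ∀ p, DifferentiableAt ℝ (fderiv ℝ F) p := fun p =>
    ((hF.fderiv_right (m := (⊤ : ℕ∞)) (by simp)).differentiable (by simp)) p
  have key : ∀ a b p, dd a (dd b F) p = fderiv ℝ (fderiv ℝ F) p a b := by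
    intro a b p
    unfold dd
    rw [fderiv_clm_apply (h2 p) (by fun_prop)]
    simp
  ext p
  rw [key, key]
  have := (hF.contDiffAt (x := p)).isSymmSndFDerivAt
    (by simp; exact WithTop.coe_le_coe.2 le_top)
  exact this v w

lemma dd_curve {E : Type*} [NormedAddCommGroup E] [NormedSpace ℝ E] (v : E) (F : E → ℝ)
    (hF : ContDiff ℝ (⊤ : ℕ∞) F) (γ : ℝ → E) (s : ℝ) (hγ : HasDerivAt γ v s) :
    HasDerivAt (fun s => F (γ s)) (dd v F (γ s)) s :=
  ((hF.differentiable (by simp)) (γ s)).hasFDerivAt.comp_hasDerivAt s hγ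

lemma partials3 (F : ℝ × ℝ × ℝ → ℝ) (hF : ContDiff ℝ (⊤ : ℕ∞) F) :
    ∃ Ft F1 F2 : ℝ × ℝ × ℝ → ℝ, Continuous F ∧ Continuous Ft ∧ Continuous F1 ∧ Continuous F2 ∧
      (∀ t a b, HasDerivAt (fun s => F (s, a, b)) (Ft (t, a, b)) t) ∧
      (∀ t a b, HasDerivAt (fun s => F (t, s, b)) (F1 (t, a, b)) a) ∧
      (∀ t a b, HasDerivAt (fun s => F (t, a, s)) (F2 (t, a, b)) b) := by
  refine ⟨dd (1, 0, 0) F, dd (0, 1, 0) F, dd (0, 0, 1) F, hF.continuous,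
    (dd_smooth _ _ hF).continuous, (dd_smooth _ _ hF).continuous, (dd_smooth _ _ hF).continuous,
    ?_, ?_, ?_⟩
  · intro t a b
    exact dd_curve _ F hF (fun s => (s, a, b)) t
      ((hasDerivAt_id t).prodMk ((hasDerivAt_const t a).prodMk (hasDerivAt_const t b)))
  · intro t a b
    exact dd_curve _ F hF (fun s => (t, s, b)) a
      ((hasDerivAt_const a t).prodMk ((hasDerivAt_id a).prodMk (hasDerivAt_const a b)))
  · intro t a b
    exact dd_curve _ F hF (fun s => (t, a, s)) b
      ((hasDerivAt_const b t).prodMk ((hasDerivAt_const b a).prodMk (hasDerivAt_id b)))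

lemma slots4 (F : ℝ × ℝ × ℝ × ℝ → ℝ) (hF : ContDiff ℝ (⊤ : ℕ∞) F) :
      (∀ t a b y, HasDerivAt (fun s => F (s, a, b, y)) (dd (1, 0, 0, 0) F (t, a, b, y)) t) ∧
      (∀ t a b y, HasDerivAt (fun s => F (t, s, b, y)) (dd (0, 1, 0, 0) F (t, a, b, y)) a) ∧
      (∀ t a b y, HasDerivAt (fun s => F (t, a, s, y)) (dd (0, 0, 1, 0) F (t, a, b, y)) b) ∧
      (∀ t a b y, HasDerivAt (fun s => F (t, a, b, s)) (dd (0, 0, 0, 1) F (t, a, b, y)) y) := by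
  refine ⟨?_, ?_, ?_, ?_⟩
  · intro t a b y
    exact dd_curve _ F hF (fun s => (s, a, b, y)) t
      ((hasDerivAt_id t).prodMk ((hasDerivAt_const t a).prodMk
        ((hasDerivAt_const t b).prodMk (hasDerivAt_const t y))))
  · intro t a b y
    exact dd_curve _ F hF (fun s => (t, s, b, y)) a
      ((hasDerivAt_const a t).prodMk ((hasDerivAt_id a).prodMk
        ((hasDerivAt_const a b).prodMk (hasDerivAt_const a y))))
  · intro t a b y
    exact dd_curve _ F hF (fun s => (t, a, s, y)) b
      ((hasDerivAt_const b t).prodMk ((hasDerivAt_const b a).prodMk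
        ((hasDerivAt_id b).prodMk (hasDerivAt_const b y))))
  · intro t a b y
    exact dd_curve _ F hF (fun s => (t, a, b, s)) y
      ((hasDerivAt_const y t).prodMk ((hasDerivAt_const y a).prodMk
        ((hasDerivAt_const y b).prodMk (hasDerivAt_id y))))

lemma chain4 (F : ℝ × ℝ × ℝ × ℝ → ℝ) (hF : ContDiff ℝ (⊤ : ℕ∞) F) (t a b : ℝ) (γ : ℝ → ℝ)
    (γ' : ℝ) (hγ : HasDerivAt γ γ' t) :
    HasDerivAt (fun s => F (s, a, b, γ s)) (dd (1, 0, 0, 0) F (t, a, b, γ t)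
      + dd (0, 0, 0, 1) F (t, a, b, γ t) * γ') t := by
  have h := dd_curve _ F hF (fun s => (s, a, b, γ s)) t
      ((hasDerivAt_id t).prodMk ((hasDerivAt_const t a).prodMk
        ((hasDerivAt_const t b).prodMk hγ)))
  refine h.congr_deriv ?_
  have : ((1:ℝ), (0:ℝ), (0:ℝ), γ') = ((1:ℝ), (0:ℝ), (0:ℝ), (0:ℝ))
      + γ' • ((0:ℝ), (0:ℝ), (0:ℝ), (1:ℝ)) := by simp
  unfold dd
  rw [this, map_add, map_smul, smul_eq_mul]
  ring

lemma partials4 (F : ℝ × ℝ × ℝ × ℝ → ℝ) (hF : ContDiff ℝ (⊤ : ℕ∞) F) :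
    ∃ Ft F1 F2 Fy Ft1 Ft2 Fty F11 F22 Fyy F1y F2y : ℝ × ℝ × ℝ × ℝ → ℝ,
      (Continuous F ∧ Continuous Ft ∧ Continuous F1 ∧ Continuous F2 ∧ Continuous Fy ∧
      Continuous Ft1 ∧ Continuous Ft2 ∧ Continuous Fty ∧ Continuous F11 ∧ Continuous F22 ∧
      Continuous Fyy ∧ Continuous F1y ∧ Continuous F2y) ∧
      (∀ t a b (γ : ℝ → ℝ) (γ' : ℝ), HasDerivAt γ γ' t → HasDerivAt (fun s => F (s, a, b, γ s))
        (Ft (t, a, b, γ t) + Fy (t, a, b, γ t) * γ') t) ∧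
      (∀ t a b y, HasDerivAt (fun s => F (s, a, b, y)) (Ft (t, a, b, y)) t) ∧
      (∀ t a b y, HasDerivAt (fun s => F (t, s, b, y)) (F1 (t, a, b, y)) a) ∧
      (∀ t a b y, HasDerivAt (fun s => F (t, a, s, y)) (F2 (t, a, b, y)) b) ∧
      (∀ t a b y, HasDerivAt (fun s => F (t, a, b, s)) (Fy (t, a, b, y)) y) ∧
      (∀ t a b y, HasDerivAt (fun s => Ft (t, s, b, y)) (Ft1 (t, a, b, y)) a) ∧
      (∀ t a b y, HasDerivAt (fun s => Ft (t, a, s, y)) (Ft2 (t, a, b, y)) b) ∧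
      (∀ t a b y, HasDerivAt (fun s => Ft (t, a, b, s)) (Fty (t, a, b, y)) y) ∧
      (∀ t a b y, HasDerivAt (fun s => F1 (s, a, b, y)) (Ft1 (t, a, b, y)) t) ∧
      (∀ t a b y, HasDerivAt (fun s => F1 (t, s, b, y)) (F11 (t, a, b, y)) a) ∧
      (∀ t a b y, HasDerivAt (fun s => F1 (t, a, b, s)) (F1y (t, a, b, y)) y) ∧
      (∀ t a b y, HasDerivAt (fun s => F2 (s, a, b, y)) (Ft2 (t, a, b, y)) t) ∧
      (∀ t a b y, HasDerivAt (fun s => F2 (t, a, s, y)) (F22 (t, a, b, y)) b) ∧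
      (∀ t a b y, HasDerivAt (fun s => F2 (t, a, b, s)) (F2y (t, a, b, y)) y) ∧
      (∀ t a b y, HasDerivAt (fun s => Fy (s, a, b, y)) (Fty (t, a, b, y)) t) ∧
      (∀ t a b y, HasDerivAt (fun s => Fy (t, s, b, y)) (F1y (t, a, b, y)) a) ∧
      (∀ t a b y, HasDerivAt (fun s => Fy (t, a, s, y)) (F2y (t, a, b, y)) b) ∧
      (∀ t a b y, HasDerivAt (fun s => Fy (t, a, b, s)) (Fyy (t, a, b, y)) y) := by
  have S := fun v => dd_smooth v F hF
  have SS := fun v w => dd_smooth v _ (S w)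
  have sl := fun v => slots4 _ (S v)
  refine ⟨dd (1, 0, 0, 0) F, dd (0, 1, 0, 0) F, dd (0, 0, 1, 0) F, dd (0, 0, 0, 1) F,
    dd (0, 1, 0, 0) (dd (1, 0, 0, 0) F), dd (0, 0, 1, 0) (dd (1, 0, 0, 0) F),
    dd (0, 0, 0, 1) (dd (1, 0, 0, 0) F), dd (0, 1, 0, 0) (dd (0, 1, 0, 0) F),
    dd (0, 0, 1, 0) (dd (0, 0, 1, 0) F), dd (0, 0, 0, 1) (dd (0, 0, 0, 1) F),
    dd (0, 0, 0, 1) (dd (0, 1, 0, 0) F), dd (0, 0, 0, 1) (dd (0, 0, 1, 0) F),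
    ⟨hF.continuous, (S _).continuous, (S _).continuous, (S _).continuous, (S _).continuous,
     (SS _ _).continuous, (SS _ _).continuous, (SS _ _).continuous, (SS _ _).continuous,
     (SS _ _).continuous, (SS _ _).continuous, (SS _ _).continuous, (SS _ _).continuous⟩,
    fun t a b γ γ' h => chain4 F hF t a b γ γ' h,
    (slots4 F hF).1, (slots4 F hF).2.1, (slots4 F hF).2.2.1, (slots4 F hF).2.2.2,
    (sl _).2.1, (sl _).2.2.1, (sl _).2.2.2, ?_, (sl _).2.1, (sl _).2.2.2,
    ?_, (sl _).2.2.1, (sl _).2.2.2, ?_, ?_, ?_, (sl _).2.2.2⟩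
  · rw [dd_comm _ _ F hF]; exact (sl _).1
  · rw [dd_comm _ _ F hF]; exact (sl _).1
  · rw [dd_comm _ _ F hF]; exact (sl _).1
  · rw [dd_comm _ _ F hF]; exact (sl _).2.1
  · rw [dd_comm _ _ F hF]; exact (sl _).2.2.1

/-- Lemma 4.7 (`d = 2`). -/
theorem lemma_A_computation_3d
    (L₁ L₂ h g T : ℝ) (hL₁ : 0 < L₁) (hL₂ : 0 < L₂) (hh : 0 < h) (hg : 0 < g) (hT : 0 < T)
    (η : ℝ → ℝ → ℝ → ℝ) (ϕ : ℝ → ℝ → ℝ → ℝ → ℝ)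
    (hsol : IsWW3D L₁ L₂ h g T η ϕ) :
    3 * (∫ t in (0:ℝ)..T, ∫ x₁ in (0:ℝ)..L₁, ∫ x₂ in (0:ℝ)..L₂,
          η t x₁ x₂ * psi3T η ϕ t x₁ x₂)
      + 2 * g * (∫ t in (0:ℝ)..T, ∫ x₁ in (0:ℝ)..L₁, ∫ x₂ in (0:ℝ)..L₂,
          (η t x₁ x₂) ^ 2)
      + 1 / 2 * (∫ t in (0:ℝ)..T, ∫ x₁ in (0:ℝ)..L₁, ∫ x₂ in (0:ℝ)..L₂,
          ∫ y in (-h)..(η t x₁ x₂), gradSq3 ϕ t x₁ x₂ y)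
      = -(T / 2) * energy3D L₁ L₂ h g η ϕ 0
        + 3 / 4 * ((∫ x₁ in (0:ℝ)..L₁, ∫ x₂ in (0:ℝ)..L₂, η T x₁ x₂ * psi3 η ϕ T x₁ x₂)
            - ∫ x₁ in (0:ℝ)..L₁, ∫ x₂ in (0:ℝ)..L₂, η 0 x₁ x₂ * psi3 η ϕ 0 x₁ x₂)
        - 9 / 8 * (∫ t in (0:ℝ)..T, ∫ x₁ in (0:ℝ)..L₁, ∫ x₂ in (0:ℝ)..L₂,
            η t x₁ x₂ * gradXSq3 ϕ t x₁ x₂ (-h))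
        + 9 / 4 * ∫ t in (0:ℝ)..T, ∫ x₁ in (0:ℝ)..L₁, ∫ x₂ in (0:ℝ)..L₂,
            ∫ y in (-h)..(η t x₁ x₂),
              phiY3 ϕ t x₁ x₂ y
                * (etaX1 η t x₁ x₂ * phiX1 ϕ t x₁ x₂ y
                    + etaX2 η t x₁ x₂ * phiX2 ϕ t x₁ x₂ y) := by
  obtain ⟨N, hN⟩ : ∃ N : ℝ × ℝ × ℝ → ℝ, N = fun p => η p.1 p.2.1 p.2.2 := ⟨_, rfl⟩
  obtain ⟨P, hP⟩ : ∃ P : ℝ × ℝ × ℝ × ℝ → ℝ, P = fun p => ϕ p.1 p.2.1 p.2.2.1 p.2.2.2 := ⟨_, rfl⟩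
  have sN : ContDiff ℝ (⊤ : ℕ∞) N := hN ▸ hsol.smooth_eta
  have sP : ContDiff ℝ (⊤ : ℕ∞) P := hP ▸ hsol.smooth_phi
  have eN : η = fun t a b => N (t, a, b) := by rw [hN]
  have eP : ϕ = fun t a b y => P (t, a, b, y) := by rw [hP]
  clear hN hP
  subst eN eP
  obtain ⟨_, _, lo, _, lap, b1, b2, bb, kin, ber, _, _⟩ := hsol
  obtain ⟨Nt, N1, N2, cN, cNt, cN1, cN2, dNt, dN1, dN2⟩ := partials3 N sN
  obtain ⟨Pt, P1, P2, Py, Pt1, Pt2, Pty, P11, P22, Pyy, P1y, P2y,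
    ⟨cP, cPt, cP1, cP2, cPy, cPt1, cPt2, cPty, cP11, cP22, cPyy, cP1y, cP2y⟩, chain,
    dPt, dP1, dP2, dPy, dPt1, dPt2, dPty, dP1t, dP11, dP1y, dP2t, dP22, dP2y,
    dPyt, dPy1, dPy2, dPyy⟩ := partials4 P sP
  have x1 : phiX1 (fun t a b y => P (t, a, b, y)) = fun t a b y => P1 (t, a, b, y) := by
    ext t a b y; exact (dP1 t a b y).deriv
  have x2 : phiX2 (fun t a b y => P (t, a, b, y)) = fun t a b y => P2 (t, a, b, y) := by
    ext t a b y; exact (dP2 t a b y).deriv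
  have x3 : phiY3 (fun t a b y => P (t, a, b, y)) = fun t a b y => Py (t, a, b, y) := by
    ext t a b y; exact (dPy t a b y).deriv
  have x4 : phiT3 (fun t a b y => P (t, a, b, y)) = fun t a b y => Pt (t, a, b, y) := by
    ext t a b y; exact (dPt t a b y).deriv
  have y1 : etaX1 (fun t a b => N (t, a, b)) = fun t a b => N1 (t, a, b) := by
    ext t a b; exact (dN1 t a b).deriv
  have y2 : etaX2 (fun t a b => N (t, a, b)) = fun t a b => N2 (t, a, b) := by
    ext t a b; exact (dN2 t a b).deriv
  have y3 : etaT3 (fun t a b => N (t, a, b)) = fun t a b => Nt (t, a, b) := by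
    ext t a b; exact (dNt t a b).deriv
  have dpsi : ∀ t a b, HasDerivAt (fun s => P (s, a, b, N (s, a, b)))
      (Pt (t, a, b, N (t, a, b)) + Py (t, a, b, N (t, a, b)) * Nt (t, a, b)) t :=
    fun t a b => chain t a b (fun s => N (s, a, b)) _ (dNt t a b)
  have y4 : psi3T (fun t a b => N (t, a, b)) (fun t a b y => P (t, a, b, y)) = fun t a b =>
      Pt (t, a, b, N (t, a, b)) + Py (t, a, b, N (t, a, b)) * Nt (t, a, b) := by
    ext t a b; exact (dpsi t a b).deriv
  have z1 : ∀ t a b y, deriv (fun s => P1 (t, s, b, y)) a = P11 (t, a, b, y) :=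
    fun t a b y => (dP11 t a b y).deriv
  have z2 : ∀ t a b y, deriv (fun s => P2 (t, a, s, y)) b = P22 (t, a, b, y) :=
    fun t a b y => (dP22 t a b y).deriv
  have z3 : ∀ t a b y, deriv (fun s => Py (t, a, b, s)) y = Pyy (t, a, b, y) :=
    fun t a b y => (dPyy t a b y).deriv
  simp only [x1, x2, x3, x4, y1, y2, y3, z1, z2, z3] at lap b1 b2 bb kin ber
  simp only [energy3D, gradSq3, gradXSq3, psi3, x1, x2, x3, y1, y2, y4]
  clear x1 x2 x3 x4 y1 y2 y3 y4 z1 z2 z3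
  have lo' : ∀ t ∈ Icc (0:ℝ) T, ∀ x ∈ Icc (0:ℝ) L₁, ∀ y ∈ Icc (0:ℝ) L₂, -h ≤ N (t, x, y) := by
    intro t ht x hx y hy
    have := lo t ht x hx y hy
    linarith
  have G0 : ∀ t ∈ Icc (0:ℝ) T, _ := fun t ht =>
    green (fun q => P (t, q)) (fun q => P1 (t, q)) (fun q => P2 (t, q)) (fun q => Py (t, q))
      (fun q => P1 (t, q)) (fun q => P2 (t, q)) (fun q => Py (t, q))
      (fun q => P11 (t, q)) (fun q => P22 (t, q)) (fun q => Pyy (t, q))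
      (by fun_prop) (by fun_prop) (by fun_prop) (by fun_prop) (by fun_prop) (by fun_prop)
      (by fun_prop) (by fun_prop) (by fun_prop) (by fun_prop)
      (dP1 t) (dP2 t) (dPy t) (dP11 t) (dP22 t) (dPyy t)
      (fun q => N (t, q)) (fun q => N1 (t, q)) (fun q => N2 (t, q)) (fun q => Nt (t, q))
      (by fun_prop) (by fun_prop) (by fun_prop) (by fun_prop) (dN1 t) (dN2 t) (-h) L₁ L₂ hL₁ hL₂
      (lo' t ht) (b1 t ht) (b2 t ht) (bb t ht) (lap t ht) (kin t ht)
  have G1 : ∀ t ∈ Icc (0:ℝ) T, _ := fun t ht =>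
    green (fun q => Pt (t, q)) (fun q => Pt1 (t, q)) (fun q => Pt2 (t, q)) (fun q => Pty (t, q))
      (fun q => P1 (t, q)) (fun q => P2 (t, q)) (fun q => Py (t, q))
      (fun q => P11 (t, q)) (fun q => P22 (t, q)) (fun q => Pyy (t, q))
      (by fun_prop) (by fun_prop) (by fun_prop) (by fun_prop) (by fun_prop) (by fun_prop)
      (by fun_prop) (by fun_prop) (by fun_prop) (by fun_prop)
      (dPt1 t) (dPt2 t) (dPty t) (dP11 t) (dP22 t) (dPyy t)
      (fun q => N (t, q)) (fun q => N1 (t, q)) (fun q => N2 (t, q)) (fun q => Nt (t, q))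
      (by fun_prop) (by fun_prop) (by fun_prop) (by fun_prop) (dN1 t) (dN2 t) (-h) L₁ L₂ hL₁ hL₂
      (lo' t ht) (b1 t ht) (b2 t ht) (bb t ht) (lap t ht) (kin t ht)
  have G2 : ∀ t ∈ Icc (0:ℝ) T, _ := fun t ht =>
    surf_id (fun q => P1 (t, q)) (fun q => P2 (t, q)) (fun q => Py (t, q))
      (fun q => P11 (t, q)) (fun q => P22 (t, q)) (fun q => Pyy (t, q))
      (fun q => P1y (t, q)) (fun q => P2y (t, q))
      (by fun_prop) (by fun_prop) (by fun_prop) (by fun_prop) (by fun_prop) (by fun_prop)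
      (by fun_prop) (by fun_prop)
      (dP11 t) (dP22 t) (dPyy t) (dP1y t) (dP2y t) (dPy1 t) (dPy2 t)
      (fun q => N (t, q)) (fun q => N1 (t, q)) (fun q => N2 (t, q))
      (by fun_prop) (by fun_prop) (by fun_prop) (dN1 t) (dN2 t) (-h) L₁ L₂ hL₁ hL₂
      (lo' t ht) (b1 t ht) (b2 t ht) (bb t ht) (lap t ht)
  refine final_comb
    (fun t => ∫ x₁ in (0:ℝ)..L₁, ∫ x₂ in (0:ℝ)..L₂, N (t, x₁, x₂)
      * (Pt (t, x₁, x₂, N (t, x₁, x₂)) + Py (t, x₁, x₂, N (t, x₁, x₂)) * Nt (t, x₁, x₂)))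
    (fun t => ∫ x₁ in (0:ℝ)..L₁, ∫ x₂ in (0:ℝ)..L₂, N (t, x₁, x₂) ^ 2)
    (fun t => ∫ x₁ in (0:ℝ)..L₁, ∫ x₂ in (0:ℝ)..L₂, ∫ y in (-h)..N (t, x₁, x₂),
      (P1 (t, x₁, x₂, y) ^ 2 + P2 (t, x₁, x₂, y) ^ 2 + Py (t, x₁, x₂, y) ^ 2))
    (fun t => ∫ x₁ in (0:ℝ)..L₁, ∫ x₂ in (0:ℝ)..L₂,
      N (t, x₁, x₂) * (P1 (t, x₁, x₂, -h) ^ 2 + P2 (t, x₁, x₂, -h) ^ 2))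
    (fun t => ∫ x₁ in (0:ℝ)..L₁, ∫ x₂ in (0:ℝ)..L₂, ∫ y in (-h)..N (t, x₁, x₂),
      Py (t, x₁, x₂, y)
        * (N1 (t, x₁, x₂) * P1 (t, x₁, x₂, y) + N2 (t, x₁, x₂) * P2 (t, x₁, x₂, y)))
    g T _ _ hT (by fun_prop) (by fun_prop) (by fun_prop) (by fun_prop) (by fun_prop) ?_ ?_ ?_
  · intro t ht
    have G := G2 t ht
    rw [int2_add (fun q => 1 / 2 * (N (t, q) * (P1 (t, q.1, q.2, -h) ^ 2 + P2 (t, q.1, q.2, -h) ^ 2)))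
      (fun q => (-1) * ∫ y in (-h)..N (t, q), Py (t, q.1, q.2, y)
        * (N1 (t, q) * P1 (t, q.1, q.2, y) + N2 (t, q) * P2 (t, q.1, q.2, y)))
      (by fun_prop) (by fun_prop)] at G
    simp only [intervalIntegral.integral_const_mul] at G
    have e1 := int2_congr hL₁ hL₂
      (U := fun x z => N (t, x, z)
        * (Pt (t, x, z, N (t, x, z)) + Py (t, x, z, N (t, x, z)) * Nt (t, x, z)))
      (V := fun x z => (-g) * N (t, x, z) ^ 2
        + (-1) * (N (t, x, z) * (1 / 2 * (P1 (t, x, z, N (t, x, z)) ^ 2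
          + P2 (t, x, z, N (t, x, z)) ^ 2 - Py (t, x, z, N (t, x, z)) ^ 2)
          + Py (t, x, z, N (t, x, z)) * (N1 (t, x, z) * P1 (t, x, z, N (t, x, z))
            + N2 (t, x, z) * P2 (t, x, z, N (t, x, z)))))) (by
        intro x hx z hz
        rw [kin t ht x hx z hz]
        linear_combination N (t, x, z) * ber t ht x hx z hz)
    rw [int2_add (fun q => (-g) * N (t, q) ^ 2)
      (fun q => (-1) * (N (t, q) * (1 / 2 * (P1 (t, q.1, q.2, N (t, q)) ^ 2
          + P2 (t, q.1, q.2, N (t, q)) ^ 2 - Py (t, q.1, q.2, N (t, q)) ^ 2)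
          + Py (t, q.1, q.2, N (t, q)) * (N1 (t, q) * P1 (t, q.1, q.2, N (t, q))
            + N2 (t, q) * P2 (t, q.1, q.2, N (t, q))))))
      (by fun_prop) (by fun_prop)] at e1
    simp only [intervalIntegral.integral_const_mul] at e1
    linear_combination e1 - G
  · intro t ht
    have sp : ∀ t, (∫ x₁ in (0:ℝ)..L₁, ∫ x₂ in (0:ℝ)..L₂, (g / 2 * N (t, x₁, x₂) ^ 2 + 1 / 2 *
        ∫ y in (-h)..N (t, x₁, x₂),
        (P1 (t, x₁, x₂, y) ^ 2 + P2 (t, x₁, x₂, y) ^ 2 + Py (t, x₁, x₂, y) ^ 2)))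
        = g / 2 * (∫ x₁ in (0:ℝ)..L₁, ∫ x₂ in (0:ℝ)..L₂, N (t, x₁, x₂) ^ 2)
          + 1 / 2 * (∫ x₁ in (0:ℝ)..L₁, ∫ x₂ in (0:ℝ)..L₂, ∫ y in (-h)..N (t, x₁, x₂),
          (P1 (t, x₁, x₂, y) ^ 2 + P2 (t, x₁, x₂, y) ^ 2 + Py (t, x₁, x₂, y) ^ 2)) := by
      intro t
      rw [int2_add (fun q => g / 2 * N (t, q) ^ 2) (fun q => 1 / 2 *
        ∫ y in (-h)..N (t, q),
        (P1 (t, q.1, q.2, y) ^ 2 + P2 (t, q.1, q.2, y) ^ 2 + Py (t, q.1, q.2, y) ^ 2))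
        (by fun_prop) (by fun_prop)]
      simp only [intervalIntegral.integral_const_mul]
    rw [← sp t, ← sp 0]
    rw [← sub_eq_zero]
    have key := time_ftc
      (fun q => g / 2 * N q ^ 2 + 1 / 2 * ∫ y in (-h)..N q,
        (P1 (q.1, q.2.1, q.2.2, y) ^ 2 + P2 (q.1, q.2.1, q.2.2, y) ^ 2
          + Py (q.1, q.2.1, q.2.2, y) ^ 2))
      (fun q => g * N q * Nt q + 1 / 2 * ((∫ y in (-h)..N q,
        2 * (Pt1 (q.1, q.2.1, q.2.2, y) * P1 (q.1, q.2.1, q.2.2, y)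
          + Pt2 (q.1, q.2.1, q.2.2, y) * P2 (q.1, q.2.1, q.2.2, y)
          + Pty (q.1, q.2.1, q.2.2, y) * Py (q.1, q.2.1, q.2.2, y)))
        + (P1 (q.1, q.2.1, q.2.2, N q) ^ 2 + P2 (q.1, q.2.1, q.2.2, N q) ^ 2
          + Py (q.1, q.2.1, q.2.2, N q) ^ 2) * Nt q))
      (by fun_prop) (by fun_prop) (by
        intro t a b
        have l := hasDeriv_leib (fun q => P1 (q.1, a, b, q.2) ^ 2 + P2 (q.1, a, b, q.2) ^ 2
          + Py (q.1, a, b, q.2) ^ 2)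
          (fun q => 2 * (Pt1 (q.1, a, b, q.2) * P1 (q.1, a, b, q.2)
          + Pt2 (q.1, a, b, q.2) * P2 (q.1, a, b, q.2)
          + Pty (q.1, a, b, q.2) * Py (q.1, a, b, q.2))) (by fun_prop) (by fun_prop)
          (by
            intro s y
            refine ((((dP1t s a b y).pow 2).add ((dP2t s a b y).pow 2)).add
              ((dPyt s a b y).pow 2)).congr_deriv ?_
            push_cast
            ring)
          (fun s => N (s, a, b)) (fun s => Nt (s, a, b)) (fun s => dNt s a b) (-h) t
        refine ((((dNt t a b).pow 2).const_mul (g / 2)).add (l.const_mul (1 / 2))).congr_deriv ?_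
        push_cast
        ring) L₁ L₂ t
    dsimp only at key
    rw [key]
    apply int_zero ht.1
    intro s hs
    have hs' : s ∈ Icc 0 T := ⟨hs.1, hs.2.trans ht.2⟩
    have G := G1 s hs'
    have e1 := int2_congr hL₁ hL₂
      (U := fun x z => g * N (s, x, z) * Nt (s, x, z) + 1 / 2 * ((∫ y in (-h)..N (s, x, z),
        2 * (Pt1 (s, x, z, y) * P1 (s, x, z, y)
          + Pt2 (s, x, z, y) * P2 (s, x, z, y)
          + Pty (s, x, z, y) * Py (s, x, z, y)))
        + (P1 (s, x, z, N (s, x, z)) ^ 2 + P2 (s, x, z, N (s, x, z)) ^ 2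
          + Py (s, x, z, N (s, x, z)) ^ 2) * Nt (s, x, z)))
      (V := fun x z => (∫ y in (-h)..N (s, x, z),
        (Pt1 (s, x, z, y) * P1 (s, x, z, y)
          + Pt2 (s, x, z, y) * P2 (s, x, z, y)
          + Pty (s, x, z, y) * Py (s, x, z, y)))
        + (-1) * (Pt (s, x, z, N (s, x, z)) * Nt (s, x, z))) (by
        intro x hx z hz
        rw [intervalIntegral.integral_const_mul]
        linear_combination Nt (s, x, z) * ber s hs' x hx z hz)
    rw [int2_add (fun q => ∫ y in (-h)..N (s, q),
        (Pt1 (s, q.1, q.2, y) * P1 (s, q.1, q.2, y)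
          + Pt2 (s, q.1, q.2, y) * P2 (s, q.1, q.2, y)
          + Pty (s, q.1, q.2, y) * Py (s, q.1, q.2, y)))
      (fun q => (-1) * (Pt (s, q.1, q.2, N (s, q)) * Nt (s, q))) (by fun_prop) (by fun_prop)] at e1
    rw [e1]
    simp only [intervalIntegral.integral_const_mul]
    linear_combination G
  · have key := time_ftc (fun q => N q * P (q.1, q.2.1, q.2.2, N q))
      (fun q => P (q.1, q.2.1, q.2.2, N q) * Nt q + N q * (Pt (q.1, q.2.1, q.2.2, N q)
        + Py (q.1, q.2.1, q.2.2, N q) * Nt q)) (by fun_prop) (by fun_prop) (by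
        intro t a b
        refine ((dNt t a b).mul (dpsi t a b)).congr_deriv ?_
        ring) L₁ L₂ T
    dsimp only at key
    rw [key]
    apply intervalIntegral.integral_congr
    intro t ht
    rw [uIcc_of_le hT.le] at ht
    dsimp only
    rw [int2_add (fun q => P (t, q.1, q.2, N (t, q)) * Nt (t, q)) (fun q => N (t, q)
      * (Pt (t, q.1, q.2, N (t, q)) + Py (t, q.1, q.2, N (t, q)) * Nt (t, q)))
      (by fun_prop) (by fun_prop)]
    have G := G0 t ht
    simp only [← pow_two] at G
    dsimp only
    rw [G]
end
end

section
/- (Unique continuation.) Let (η, ϕ) be a smooth solution of the two-dimensional water-wave system on [0,T], with (conserved) energy 𝓗 := 𝓗(0). Assume there exist positive constants A, B such that B < 2/7, T ≥ (4/(2 − 7B))·(1 + 5L₁A/√g), sup_{t∈[0,T]} ‖∂ₓη(t,·)‖_{L^∞([0,L₁])} ≤ B and sup_{t∈[0,T]} ‖∂ₓψ(t,·)‖_{L²([0,L₁])} ≤ A·√(2𝓗). If moreover η(t,L₁) = 0 for every t ∈ [0,T], then 𝓗 = 0; consequently η(t,x) = 0 and ∂ₓϕ(t,x,y) = ∂_yϕ(t,x,y)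 = 0 for all t ∈ [0,T] and all (x,y) ∈ Ω(t). -/
open Real Set MeasureTheory

noncomputable section

/-- `∂ₓϕ(t,x,y)` -/
def phiX (ϕ : ℝ → ℝ → ℝ → ℝ) (t x y : ℝ) : ℝ := deriv (fun x' => ϕ t x' y) x

/-- `∂_yϕ(t,x,y)` -/
def phiY (ϕ : ℝ → ℝ → ℝ → ℝ) (t x y : ℝ) : ℝ := deriv (fun y' => ϕ t x y') y

/-- `∂ₜϕ(t,x,y)` -/
def phiT (ϕ : ℝ → ℝ → ℝ → ℝ) (t x y : ℝ) : ℝ := deriv (fun s => ϕ s x y) t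

/-- `∂ₓη(t,x)` -/
def etaX (η : ℝ → ℝ → ℝ) (t x : ℝ) : ℝ := deriv (fun x' => η t x') x

/-- `∂ₜη(t,x)` -/
def etaT (η : ℝ → ℝ → ℝ) (t x : ℝ) : ℝ := deriv (fun s => η s x) t

/-- the trace `ψ(t,x) = ϕ(t,x,η(t,x))` -/
def psi (η : ℝ → ℝ → ℝ) (ϕ : ℝ → ℝ → ℝ → ℝ) (t x : ℝ) : ℝ := ϕ t x (η t x)

/-- `∂ₜψ(t,x)` -/
def psiT (η : ℝ → ℝ → ℝ) (ϕ : ℝ → ℝ → ℝ → ℝ) (t x : ℝ) : ℝ :=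
  deriv (fun s => psi η ϕ s x) t

/-- `∂ₓψ(t,x)` -/
def psiX (η : ℝ → ℝ → ℝ) (ϕ : ℝ → ℝ → ℝ → ℝ) (t x : ℝ) : ℝ :=
  deriv (fun x' => psi η ϕ t x') x

/-- `Θ(t,x) = -η ∂ₜψ - (g/2) η²` -/
def Theta (g : ℝ) (η : ℝ → ℝ → ℝ) (ϕ : ℝ → ℝ → ℝ → ℝ) (t x : ℝ) : ℝ :=
  -(η t x) * psiT η ϕ t x - g / 2 * (η t x) ^ 2

/-- the energy `𝓗(t)` -/
def energy2D (L₁ h g : ℝ) (η : ℝ → ℝ → ℝ) (ϕ : ℝ → ℝ → ℝ → ℝ) (t : ℝ) : ℝ :=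
  g / 2 * (∫ x in (0:ℝ)..L₁, (η t x) ^ 2)
    + 1 / 2 * ∫ x in (0:ℝ)..L₁, ∫ y in (-h)..(η t x),
        ((phiX ϕ t x y) ^ 2 + (phiY ϕ t x y) ^ 2)

/-- A smooth solution of the two-dimensional water-wave system on `[0,T]`:
`η : [0,T] × [0,L₁] → ℝ` and `ϕ` on the fluid domain (both given as smooth total
functions), satisfying the incompressibility, boundary, kinematic and Bernoulli
(dynamic) conditions, together with `η ≥ -h/2`, zero mean, and the right-angle
contact conditions `∂ₓη(t,0) = ∂ₓη(t,L₁) = 0`. -/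
structure IsWW2D (L₁ h g T : ℝ) (η : ℝ → ℝ → ℝ) (ϕ : ℝ → ℝ → ℝ → ℝ) : Prop where
  smooth_eta : ContDiff ℝ (⊤ : ℕ∞) (fun p : ℝ × ℝ => η p.1 p.2)
  smooth_phi : ContDiff ℝ (⊤ : ℕ∞) (fun p : ℝ × ℝ × ℝ => ϕ p.1 p.2.1 p.2.2)
  eta_lower : ∀ t ∈ Icc (0:ℝ) T, ∀ x ∈ Icc (0:ℝ) L₁, -h / 2 ≤ η t x
  eta_mean : ∀ t ∈ Icc (0:ℝ) T, (∫ x in (0:ℝ)..L₁, η t x) = 0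
  laplace : ∀ t ∈ Icc (0:ℝ) T, ∀ x ∈ Icc (0:ℝ) L₁, ∀ y ∈ Icc (-h) (η t x),
    deriv (fun x' => phiX ϕ t x' y) x + deriv (fun y' => phiY ϕ t x y') y = 0
  bc_left : ∀ t ∈ Icc (0:ℝ) T, ∀ y ∈ Icc (-h) (η t 0), phiX ϕ t 0 y = 0
  bc_right : ∀ t ∈ Icc (0:ℝ) T, ∀ y ∈ Icc (-h) (η t L₁), phiX ϕ t L₁ y = 0
  bc_bottom : ∀ t ∈ Icc (0:ℝ) T, ∀ x ∈ Icc (0:ℝ) L₁, phiY ϕ t x (-h) = 0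
  kinematic : ∀ t ∈ Icc (0:ℝ) T, ∀ x ∈ Icc (0:ℝ) L₁,
    etaT η t x = phiY ϕ t x (η t x) - etaX η t x * phiX ϕ t x (η t x)
  bernoulli : ∀ t ∈ Icc (0:ℝ) T, ∀ x ∈ Icc (0:ℝ) L₁,
    phiT ϕ t x (η t x)
      + 1 / 2 * ((phiX ϕ t x (η t x)) ^ 2 + (phiY ϕ t x (η t x)) ^ 2) + g * η t x = 0
  etaX_left : ∀ t ∈ Icc (0:ℝ) T, etaX η t 0 = 0
  etaX_right : ∀ t ∈ Icc (0:ℝ) T, etaX η t L₁ = 0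

/-- differentiation under the integral sign -/
lemma ww_param (J J' : ℝ → ℝ → ℝ) (hJ : ∀ t x, HasDerivAt (fun s => J s x) (J' t x) t)
    (cJ : ∀ t, Continuous (J t)) (cJ' : Continuous (fun p : ℝ × ℝ => J' p.1 p.2)) (a b t : ℝ) :
    HasDerivAt (fun s => ∫ x in a..b, J s x) (∫ x in a..b, J' t x) t := by
  obtain ⟨C, hC⟩ := ((isCompact_Icc (a := t - 1) (b := t + 1)).prod
    (isCompact_uIcc (a := a) (b := b))).exists_bound_of_continuousOn cJ'.continuousOn
  have cJt : ∀ s, Continuous (J' s) := fun s => by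
    have := cJ'.comp (continuous_const.prodMk continuous_id : Continuous (fun x : ℝ => (s, x)))
    exact this
  refine (intervalIntegral.hasDerivAt_integral_of_dominated_loc_of_deriv_le
    (F := J) (F' := J') (s := Icc (t - 1) (t + 1)) (bound := fun _ => C)
    (Icc_mem_nhds (by linarith) (by linarith)) ?_ ?_ ?_ ?_ ?_ ?_).2
  · exact Filter.Eventually.of_forall fun s => (cJ s).aestronglyMeasurable
  · exact (cJ t).intervalIntegrable _ _
  · exact (cJt t).aestronglyMeasurable
  · refine Filter.Eventually.of_forall fun x hx s hs => hC (s, x) ⟨hs, uIoc_subset_uIcc hx⟩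
  · exact intervalIntegrable_const
  · exact Filter.Eventually.of_forall fun x _ s _ => hJ s x

/-- Leibniz rule with moving endpoint -/
lemma ww_leibniz (f f' : ℝ → ℝ → ℝ) (u u' : ℝ → ℝ) (a : ℝ)
    (hf : ∀ t y, HasDerivAt (fun s => f s y) (f' t y) t)
    (cf : Continuous (fun p : ℝ × ℝ => f p.1 p.2))
    (cf' : Continuous (fun p : ℝ × ℝ => f' p.1 p.2))
    (hu : ∀ t, HasDerivAt u (u' t) t) (t : ℝ) :
    HasDerivAt (fun s => ∫ y in a..u s, f s y)
      (f t (u t) * u' t + ∫ y in a..u t, f' t y) t := by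
  have cu : Continuous u := continuous_iff_continuousAt.2 fun t => (hu t).continuousAt
  have cft : ∀ s, Continuous (f s) := fun s => by
    have := cf.comp (continuous_const.prodMk continuous_id : Continuous (fun x : ℝ => (s, x)))
    exact this
  have h1 := ww_param f f' hf cft cf' a (u t) t
  let c : ℝ → ℝ := fun s => ∫ r in (0:ℝ)..1, f s (u t + r * (u s - u t))
  have cc : Continuous c := by
    apply intervalIntegral.continuous_parametric_intervalIntegral_of_continuous'
    have : Continuous (fun q : ℝ × ℝ => (q.1, u t + q.2 * (u q.1 - u t))) := by fun_prop
    exact cf.comp this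
  have hc : ∀ s, ∫ y in (u t)..(u s), f s y = c s * (u s - u t) := by
    intro s
    have := intervalIntegral.smul_integral_comp_add_mul (f s) (u s - u t) (u t) (a := 0) (b := 1)
    simp only [mul_zero, add_zero, mul_one, smul_eq_mul] at this
    have e : u t + (u s - u t) = u s := by ring
    rw [e] at this
    rw [← this, mul_comm]
    congr 1
    apply intervalIntegral.integral_congr
    intro r _
    simp only [mul_comm]
  have h2 : HasDerivAt (fun s => c s * (u s - u t)) (f t (u t) * u' t) t := by
    have hct : c t = f t (u t) := by simp [c]
    rw [hasDerivAt_iff_tendsto_slope]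
    have hs := (hasDerivAt_iff_tendsto_slope.1 (hu t))
    have := (cc.continuousAt.tendsto.mono_left (nhdsWithin_le_nhds (a := t) (s := {t}ᶜ))).mul hs
    rw [hct] at this
    refine this.congr fun s => ?_
    simp only [slope_def_field]
    ring
  have h3 := h2.add h1
  refine h3.congr_of_eventuallyEq (Filter.Eventually.of_forall fun s => ?_)
  simp only [Pi.add_apply]
  rw [← hc s, add_comm]
  exact (intervalIntegral.integral_add_adjacent_intervals ((cft s).intervalIntegrable _ _)
    ((cft s).intervalIntegrable _ _)).symm

/-- divergence theorem in the fluid domain -/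
lemma ww_div (P Q Px Qy : ℝ → ℝ → ℝ) (e e' : ℝ → ℝ) (L h : ℝ)
    (hP : ∀ x y, HasDerivAt (fun s => P s y) (Px x y) x)
    (hQ : ∀ x y, HasDerivAt (fun s => Q x s) (Qy x y) y)
    (cP : Continuous (fun p : ℝ × ℝ => P p.1 p.2))
    (cQ : Continuous (fun p : ℝ × ℝ => Q p.1 p.2))
    (cPx : Continuous (fun p : ℝ × ℝ => Px p.1 p.2))
    (cQy : Continuous (fun p : ℝ × ℝ => Qy p.1 p.2))
    (he : ∀ x, HasDerivAt e (e' x) x) (ce' : Continuous e') :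
    ∫ x in (0:ℝ)..L, ∫ y in (-h)..(e x), (Px x y + Qy x y)
      = (∫ x in (0:ℝ)..L, (Q x (e x) - e' x * P x (e x))) - (∫ x in (0:ℝ)..L, Q x (-h))
        + (∫ y in (-h)..(e L), P L y) - (∫ y in (-h)..(e 0), P 0 y) := by
  have ce : Continuous e := continuous_iff_continuousAt.2 fun t => (he t).continuousAt
  have c1 : Continuous (fun x => ∫ y in (-h)..(e x), Px x y) :=
    intervalIntegral.continuous_parametric_intervalIntegral_of_continuous cPx ce
  have c2 : Continuous (fun x => P x (e x)) := cP.comp (by fun_prop : Continuous fun x => (x, e x))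
  have c3 : Continuous (fun x => Q x (e x)) := cQ.comp (by fun_prop : Continuous fun x => (x, e x))
  have c4 : Continuous (fun x => Q x (-h)) := cQ.comp (by fun_prop : Continuous fun x => (x, -h))
  have s1 : ∀ x, Continuous (Px x) := fun x => cPx.comp (by fun_prop : Continuous fun y => (x, y))
  have s2 : ∀ x, Continuous (Qy x) := fun x => cQy.comp (by fun_prop : Continuous fun y => (x, y))
  have h1 := intervalIntegral.integral_eq_sub_of_hasDerivAt (a := 0) (b := L)
    (fun x _ => ww_leibniz P Px e e' (-h) hP cP cPx he x)
    ((by fun_prop : Continuous _).intervalIntegrable _ _)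
  have h2 : ∀ x, ∫ y in (-h)..(e x), (Px x y + Qy x y)
      = (P x (e x) * e' x + ∫ y in (-h)..(e x), Px x y)
        + ((Q x (e x) - e' x * P x (e x)) - Q x (-h)) := by
    intro x
    rw [intervalIntegral.integral_add ((s1 x).intervalIntegrable _ _)
      ((s2 x).intervalIntegrable _ _),
      intervalIntegral.integral_eq_sub_of_hasDerivAt (fun y _ => hQ x y)
      ((s2 x).intervalIntegrable _ _)]
    ring
  simp only [h2]
  rw [intervalIntegral.integral_add ((by fun_prop : Continuous _).intervalIntegrable _ _)
    ((by fun_prop : Continuous _).intervalIntegrable _ _), h1,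
    intervalIntegral.integral_sub ((by fun_prop : Continuous _).intervalIntegrable _ _)
    ((by fun_prop : Continuous _).intervalIntegrable _ _)]
  ring

/-- Cauchy-Schwarz -/
lemma ww_cs (f k : ℝ → ℝ) (cf : Continuous f) (ck : Continuous k) (L : ℝ) (hL : 0 ≤ L) :
    ∫ x in (0:ℝ)..L, |f x| * |k x|
      ≤ Real.sqrt (∫ x in (0:ℝ)..L, f x ^ 2) * Real.sqrt (∫ x in (0:ℝ)..L, k x ^ 2) := by
  rw [← Real.sqrt_mul (intervalIntegral.integral_nonneg hL fun x _ => sq_nonneg _)]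
  apply Real.le_sqrt_of_sq_le
  have key : ∀ r : ℝ, 0 ≤ (∫ x in (0:ℝ)..L, f x ^ 2) * (r * r)
      + (-2 * ∫ x in (0:ℝ)..L, |f x| * |k x|) * r + ∫ x in (0:ℝ)..L, k x ^ 2 := by
    intro r
    have h0 : 0 ≤ ∫ x in (0:ℝ)..L, (r * |f x| - |k x|) ^ 2 :=
      intervalIntegral.integral_nonneg hL fun x _ => sq_nonneg _
    have : ∀ x, (r * |f x| - |k x|) ^ 2
        = (r * r) * f x ^ 2 + (-2 * r) * (|f x| * |k x|) + k x ^ 2 := by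
      intro x
      rw [← sq_abs (f x), ← sq_abs (k x)]; ring
    simp only [this] at h0
    rw [intervalIntegral.integral_add ((by fun_prop : Continuous _).intervalIntegrable _ _)
      ((by fun_prop : Continuous _).intervalIntegrable _ _),
      intervalIntegral.integral_add ((by fun_prop : Continuous _).intervalIntegrable _ _)
      ((by fun_prop : Continuous _).intervalIntegrable _ _),
      intervalIntegral.integral_const_mul, intervalIntegral.integral_const_mul] at h0
    linarith
  have := discrim_le_zero key
  unfold discrim at this
  nlinarith

lemma ww_zero (f : ℝ → ℝ) (a b : ℝ) (hab : a < b) (cf : Continuous f)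
    (h0 : ∀ x ∈ Icc a b, 0 ≤ f x) (hI : ∫ x in a..b, f x = 0) : ∀ x ∈ Icc a b, f x = 0 := by
  intro x hx
  by_contra hne
  have := intervalIntegral.integral_pos hab cf.continuousOn
    (fun y hy => h0 y (Ioc_subset_Icc_self hy)) ⟨x, hx, lt_of_le_of_ne (h0 x hx) (Ne.symm hne)⟩
  linarith

/-- smooth function of three variables -/
def Sm3 (f : ℝ → ℝ → ℝ → ℝ) : Prop :=
  ContDiff ℝ (⊤ : ℕ∞) (fun p : ℝ × ℝ × ℝ => f p.1 p.2.1 p.2.2)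

/-- smooth function of two variables -/
def Sm2 (f : ℝ → ℝ → ℝ) : Prop := ContDiff ℝ (⊤ : ℕ∞) (fun p : ℝ × ℝ => f p.1 p.2)

lemma ww_dir {E : Type*} [NormedAddCommGroup E] [NormedSpace ℝ E] {F : E → ℝ}
    (hF : ContDiff ℝ (⊤ : ℕ∞) F) (v : E) : ContDiff ℝ (⊤ : ℕ∞) (fun p => fderiv ℝ F p v) := by
  have : ContDiff ℝ (⊤ : ℕ∞) (fderiv ℝ F) := hF.fderiv_right (by simp)
  exact this.clm_apply contDiff_const

lemma ww_symm {E : Type*} [NormedAddCommGroup E] [NormedSpace ℝ E] {F : E → ℝ}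
    (hF : ContDiff ℝ (⊤ : ℕ∞) F) (v w : E) (p : E) :
    fderiv ℝ (fun q => fderiv ℝ F q v) p w = fderiv ℝ (fun q => fderiv ℝ F q w) p v := by
  have hd : DifferentiableAt ℝ (fderiv ℝ F) p :=
    ((hF.fderiv_right (m := (⊤ : ℕ∞)) (by simp)).differentiable (by simp)) p
  have hs := (hF.contDiffAt (x := p)).isSymmSndFDerivAt (by
    simp only [minSmoothness_of_isRCLikeNormedField]; exact WithTop.coe_le_coe.2 (le_top : (2 : ℕ∞) ≤ ⊤))
  rw [fderiv_clm_apply hd (by fun_prop), fderiv_clm_apply hd (by fun_prop)]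
  simp
  exact hs.eq w v

lemma ww_chain {E : Type*} [NormedAddCommGroup E] [NormedSpace ℝ E] {F : E → ℝ}
    (hF : ContDiff ℝ (⊤ : ℕ∞) F) {c : ℝ → E} {c' : E} {s : ℝ} (hc : HasDerivAt c c' s) :
    HasDerivAt (fun r => F (c r)) (fderiv ℝ F (c s) c') s :=
  ((hF.differentiable (by simp)) (c s)).hasFDerivAt.comp_hasDerivAt s hc

section
variable {f : ℝ → ℝ → ℝ → ℝ} (hf : Sm3 f)

lemma Sm3.dX (hf : Sm3 f) (t x y : ℝ) : HasDerivAt (fun s => f t s y)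
    (fderiv ℝ (fun p : ℝ × ℝ × ℝ => f p.1 p.2.1 p.2.2) (t, x, y) (0, 1, 0)) x :=
  ww_chain hf (c := fun s => (t, s, y))
    ((hasDerivAt_const _ _).prodMk ((hasDerivAt_id x).prodMk (hasDerivAt_const _ _)))

lemma Sm3.dY (hf : Sm3 f) (t x y : ℝ) : HasDerivAt (fun s => f t x s)
    (fderiv ℝ (fun p : ℝ × ℝ × ℝ => f p.1 p.2.1 p.2.2) (t, x, y) (0, 0, 1)) y :=
  ww_chain hf (c := fun s => (t, x, s))
    ((hasDerivAt_const _ _).prodMk ((hasDerivAt_const _ _).prodMk (hasDerivAt_id y)))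

lemma Sm3.dT (hf : Sm3 f) (t x y : ℝ) : HasDerivAt (fun s => f s x y)
    (fderiv ℝ (fun p : ℝ × ℝ × ℝ => f p.1 p.2.1 p.2.2) (t, x, y) (1, 0, 0)) t :=
  ww_chain hf (c := fun s => (s, x, y))
    ((hasDerivAt_id t).prodMk ((hasDerivAt_const _ _).prodMk (hasDerivAt_const _ _)))

lemma Sm3.eX (hf : Sm3 f) (t x y : ℝ) : phiX f t x y =
    fderiv ℝ (fun p : ℝ × ℝ × ℝ => f p.1 p.2.1 p.2.2) (t, x, y) (0, 1, 0) := (hf.dX t x y).deriv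
lemma Sm3.eY (hf : Sm3 f) (t x y : ℝ) : phiY f t x y =
    fderiv ℝ (fun p : ℝ × ℝ × ℝ => f p.1 p.2.1 p.2.2) (t, x, y) (0, 0, 1) := (hf.dY t x y).deriv
lemma Sm3.eT (hf : Sm3 f) (t x y : ℝ) : phiT f t x y =
    fderiv ℝ (fun p : ℝ × ℝ × ℝ => f p.1 p.2.1 p.2.2) (t, x, y) (1, 0, 0) := (hf.dT t x y).deriv

lemma Sm3.hX (hf : Sm3 f) (t x y : ℝ) : HasDerivAt (fun s => f t s y) (phiX f t x y) x := by
  rw [hf.eX]; exact hf.dX t x y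
lemma Sm3.hY (hf : Sm3 f) (t x y : ℝ) : HasDerivAt (fun s => f t x s) (phiY f t x y) y := by
  rw [hf.eY]; exact hf.dY t x y
lemma Sm3.hT (hf : Sm3 f) (t x y : ℝ) : HasDerivAt (fun s => f s x y) (phiT f t x y) t := by
  rw [hf.eT]; exact hf.dT t x y

lemma Sm3.sX (hf : Sm3 f) : Sm3 (phiX f) := by
  unfold Sm3; simp only [hf.eX]; exact ww_dir hf _
lemma Sm3.sY (hf : Sm3 f) : Sm3 (phiY f) := by
  unfold Sm3; simp only [hf.eY]; exact ww_dir hf _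
lemma Sm3.sT (hf : Sm3 f) : Sm3 (phiT f) := by
  unfold Sm3; simp only [hf.eT]; exact ww_dir hf _

lemma Sm3.XY (hf : Sm3 f) (t x y : ℝ) : phiX (phiY f) t x y = phiY (phiX f) t x y := by
  rw [hf.sY.eX, hf.sX.eY]; simp only [hf.eX, hf.eY]; exact ww_symm hf _ _ _
lemma Sm3.TY (hf : Sm3 f) (t x y : ℝ) : phiT (phiY f) t x y = phiY (phiT f) t x y := by
  rw [hf.sY.eT, hf.sT.eY]; simp only [hf.eT, hf.eY]; exact ww_symm hf _ _ _
lemma Sm3.TX (hf : Sm3 f) (t x y : ℝ) : phiT (phiX f) t x y = phiX (phiT f) t x y := by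
  rw [hf.sX.eT, hf.sT.eX]; simp only [hf.eT, hf.eX]; exact ww_symm hf _ _ _

lemma Sm3.cont (hf : Sm3 f) : Continuous (fun p : ℝ × ℝ × ℝ => f p.1 p.2.1 p.2.2) :=
  ContDiff.continuous hf

lemma Sm3.ct (hf : Sm3 f) (t : ℝ) : Continuous (fun p : ℝ × ℝ => f t p.1 p.2) :=
  hf.cont.comp (by fun_prop : Continuous fun p : ℝ × ℝ => (t, p.1, p.2))

/-- chain rule along a curve on the surface -/
lemma Sm3.chain (hf : Sm3 f) (a b c : ℝ → ℝ) (a' b' c' s : ℝ) (ha : HasDerivAt a a' s)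
    (hb : HasDerivAt b b' s) (hc : HasDerivAt c c' s) :
    HasDerivAt (fun r => f (a r) (b r) (c r))
      (a' * phiT f (a s) (b s) (c s) + b' * phiX f (a s) (b s) (c s)
        + c' * phiY f (a s) (b s) (c s)) s := by
  have := ww_chain hf (c := fun r => (a r, b r, c r)) (ha.prodMk (hb.prodMk hc))
  convert this using 1
  rw [hf.eX, hf.eY, hf.eT]
  have e : ((a', b', c') : ℝ × ℝ × ℝ)
      = a' • ((1, 0, 0) : ℝ × ℝ × ℝ) + b' • ((0, 1, 0) : ℝ × ℝ × ℝ)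
        + c' • ((0, 0, 1) : ℝ × ℝ × ℝ) := by simp
  rw [e, map_add, map_add, map_smul, map_smul, map_smul]
  simp
end

section
variable {f : ℝ → ℝ → ℝ}

lemma Sm2.dX (hf : Sm2 f) (t x : ℝ) : HasDerivAt (fun s => f t s)
    (fderiv ℝ (fun p : ℝ × ℝ => f p.1 p.2) (t, x) (0, 1)) x :=
  ww_chain hf (c := fun s => (t, s)) ((hasDerivAt_const _ _).prodMk (hasDerivAt_id x))
lemma Sm2.dT (hf : Sm2 f) (t x : ℝ) : HasDerivAt (fun s => f s x)
    (fderiv ℝ (fun p : ℝ × ℝ => f p.1 p.2) (t, x) (1, 0)) t :=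
  ww_chain hf (c := fun s => (s, x)) ((hasDerivAt_id t).prodMk (hasDerivAt_const _ _))
lemma Sm2.eX (hf : Sm2 f) (t x : ℝ) : etaX f t x =
    fderiv ℝ (fun p : ℝ × ℝ => f p.1 p.2) (t, x) (0, 1) := (hf.dX t x).deriv
lemma Sm2.eT (hf : Sm2 f) (t x : ℝ) : etaT f t x =
    fderiv ℝ (fun p : ℝ × ℝ => f p.1 p.2) (t, x) (1, 0) := (hf.dT t x).deriv
lemma Sm2.hX (hf : Sm2 f) (t x : ℝ) : HasDerivAt (fun s => f t s) (etaX f t x) x := by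
  rw [hf.eX]; exact hf.dX t x
lemma Sm2.hT (hf : Sm2 f) (t x : ℝ) : HasDerivAt (fun s => f s x) (etaT f t x) t := by
  rw [hf.eT]; exact hf.dT t x
lemma Sm2.sX (hf : Sm2 f) : Sm2 (etaX f) := by
  unfold Sm2; simp only [hf.eX]; exact ww_dir hf _
lemma Sm2.sT (hf : Sm2 f) : Sm2 (etaT f) := by
  unfold Sm2; simp only [hf.eT]; exact ww_dir hf _
lemma Sm2.TX (hf : Sm2 f) (t x : ℝ) : etaT (etaX f) t x = etaX (etaT f) t x := by
  rw [hf.sX.eT, hf.sT.eX]; simp only [hf.eT, hf.eX]; exact ww_symm hf _ _ _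
lemma Sm2.cont (hf : Sm2 f) : Continuous (fun p : ℝ × ℝ => f p.1 p.2) :=
  ContDiff.continuous hf
lemma Sm2.ct (hf : Sm2 f) (t : ℝ) : Continuous (fun x => f t x) :=
  hf.cont.comp (by fun_prop : Continuous fun x : ℝ => (t, x))
lemma Sm2.psi (hf : Sm2 f) {k : ℝ → ℝ → ℝ → ℝ} (hk : Sm3 k) : Sm2 (psi f k) :=
  ContDiff.comp hk (contDiff_fst.prodMk (contDiff_snd.prodMk hf))
end

/-- Green's formula in the fluid domain -/
lemma ww_green (w wx wy u v ux vy : ℝ → ℝ → ℝ) (e e' : ℝ → ℝ) (L h : ℝ) (hL : 0 < L)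
    (hh : 0 < h)
    (hwx : ∀ x y, HasDerivAt (fun s => w s y) (wx x y) x)
    (hwy : ∀ x y, HasDerivAt (fun s => w x s) (wy x y) y)
    (hux : ∀ x y, HasDerivAt (fun s => u s y) (ux x y) x)
    (hvy : ∀ x y, HasDerivAt (fun s => v x s) (vy x y) y)
    (cw : Continuous (fun p : ℝ × ℝ => w p.1 p.2))
    (cwx : Continuous (fun p : ℝ × ℝ => wx p.1 p.2))
    (cwy : Continuous (fun p : ℝ × ℝ => wy p.1 p.2))
    (cu : Continuous (fun p : ℝ × ℝ => u p.1 p.2))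
    (cv : Continuous (fun p : ℝ × ℝ => v p.1 p.2))
    (cux : Continuous (fun p : ℝ × ℝ => ux p.1 p.2))
    (cvy : Continuous (fun p : ℝ × ℝ => vy p.1 p.2))
    (he : ∀ x, HasDerivAt e (e' x) x) (ce' : Continuous e')
    (elow : ∀ x ∈ Icc 0 L, -h / 2 ≤ e x)
    (lap : ∀ x ∈ Icc 0 L, ∀ y ∈ Icc (-h) (e x), ux x y + vy x y = 0)
    (b0 : ∀ y ∈ Icc (-h) (e 0), u 0 y = 0) (bL : ∀ y ∈ Icc (-h) (e L), u L y = 0)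
    (bh : ∀ x ∈ Icc 0 L, v x (-h) = 0) :
    ∫ x in (0:ℝ)..L, ∫ y in (-h)..(e x), (wx x y * u x y + wy x y * v x y)
      = ∫ x in (0:ℝ)..L, w x (e x) * (v x (e x) - e' x * u x (e x)) := by
  have hle : ∀ x ∈ Icc 0 L, -h ≤ e x := fun x hx => by linarith [elow x hx]
  have D := ww_div (fun x y => w x y * u x y) (fun x y => w x y * v x y)
    (fun x y => wx x y * u x y + w x y * ux x y) (fun x y => wy x y * v x y + w x y * vy x y)
    e e' L h (fun x y => (hwx x y).mul (hux x y)) (fun x y => (hwy x y).mul (hvy x y))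
    (by fun_prop) (by fun_prop) (by fun_prop) (by fun_prop) he ce'
  have z1 : ∫ x in (0:ℝ)..L, w x (-h) * v x (-h) = 0 := by
    rw [intervalIntegral.integral_congr (g := fun _ => (0:ℝ))]
    · simp
    · intro x hx; rw [uIcc_of_le hL.le] at hx; simp [bh x hx]
  have z2 : ∫ y in (-h)..(e L), w L y * u L y = 0 := by
    rw [intervalIntegral.integral_congr (g := fun _ => (0:ℝ))]
    · simp
    · intro y hy; rw [uIcc_of_le (hle L ⟨hL.le, le_rfl⟩)] at hy; simp [bL y hy]
  have z3 : ∫ y in (-h)..(e 0), w 0 y * u 0 y = 0 := by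
    rw [intervalIntegral.integral_congr (g := fun _ => (0:ℝ))]
    · simp
    · intro y hy; rw [uIcc_of_le (hle 0 ⟨le_rfl, hL.le⟩)] at hy; simp [b0 y hy]
  rw [z1, z2, z3] at D
  have E1 : ∫ x in (0:ℝ)..L, ∫ y in (-h)..(e x), (wx x y * u x y + wy x y * v x y)
      = ∫ x in (0:ℝ)..L, ∫ y in (-h)..(e x), (wx x y * u x y + w x y * ux x y +
        (wy x y * v x y + w x y * vy x y)) := by
    apply intervalIntegral.integral_congr
    intro x hx
    rw [uIcc_of_le hL.le] at hx
    apply intervalIntegral.integral_congr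
    intro y hy
    rw [uIcc_of_le (hle x hx)] at hy
    have := lap x hx y hy
    simp only
    linear_combination (-w x y) * this
  rw [E1, D]
  simp only [sub_zero, add_zero]
  apply intervalIntegral.integral_congr
  intro x _
  simp only
  ring

/-- the Pohozaev type inequality -/
lemma ww_pohozaev (u v ux uy vy : ℝ → ℝ → ℝ) (e e' : ℝ → ℝ) (L h B : ℝ) (hL : 0 < L)
    (hh : 0 < h)
    (hux : ∀ x y, HasDerivAt (fun s => u s y) (ux x y) x)
    (huy : ∀ x y, HasDerivAt (fun s => u x s) (uy x y) y)
    (hvx : ∀ x y, HasDerivAt (fun s => v s y) (uy x y) x)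
    (hvy : ∀ x y, HasDerivAt (fun s => v x s) (vy x y) y)
    (cu : Continuous (fun p : ℝ × ℝ => u p.1 p.2))
    (cv : Continuous (fun p : ℝ × ℝ => v p.1 p.2))
    (cux : Continuous (fun p : ℝ × ℝ => ux p.1 p.2))
    (cuy : Continuous (fun p : ℝ × ℝ => uy p.1 p.2))
    (cvy : Continuous (fun p : ℝ × ℝ => vy p.1 p.2))
    (he : ∀ x, HasDerivAt e (e' x) x) (ce' : Continuous e')
    (elow : ∀ x ∈ Icc 0 L, -h / 2 ≤ e x)
    (lap : ∀ x ∈ Icc 0 L, ∀ y ∈ Icc (-h) (e x), ux x y + vy x y = 0)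
    (b0 : ∀ y ∈ Icc (-h) (e 0), u 0 y = 0) (bL : ∀ y ∈ Icc (-h) (e L), u L y = 0)
    (bh : ∀ x ∈ Icc 0 L, v x (-h) = 0) (hB : ∀ x ∈ Icc 0 L, |e' x| ≤ B) :
    -(7 / 4) * B * (1 / 2 * ∫ x in (0:ℝ)..L, ∫ y in (-h)..(e x), (u x y ^ 2 + v x y ^ 2))
      ≤ (∫ x in (0:ℝ)..L, x * (u x (e x) * v x (e x)
          + 1 / 2 * e' x * (v x (e x) ^ 2 - u x (e x) ^ 2)))
        - 3 / 4 * ∫ x in (0:ℝ)..L, e x * (1 / 2 * v x (e x) ^ 2 - 1 / 2 * u x (e x) ^ 2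
          - e' x * u x (e x) * v x (e x)) := by
  have ce : Continuous e := continuous_iff_continuousAt.2 fun t => (he t).continuousAt
  have hle : ∀ x ∈ Icc 0 L, -h ≤ e x := fun x hx => by linarith [elow x hx]
  have cub : Continuous (fun x => u x (-h)) := cu.comp (by fun_prop : Continuous fun x => (x, -h))
  -- x multiplier
  have D1 := ww_div (fun x y => x * (1 / 2 * (u x y ^ 2 - v x y ^ 2)))
    (fun x y => x * (u x y * v x y))
    (fun x y => 1 * (1 / 2 * (u x y ^ 2 - v x y ^ 2))
      + x * (1 / 2 * (((2:ℕ) : ℝ) * u x y ^ (2 - 1) * ux x y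
        - ((2:ℕ) : ℝ) * v x y ^ (2 - 1) * uy x y)))
    (fun x y => x * (uy x y * v x y + u x y * vy x y)) e e' L h
    (fun x y => (hasDerivAt_id x).mul ((((hux x y).pow 2).sub ((hvx x y).pow 2)).const_mul _))
    (fun x y => (((huy x y).mul (hvy x y)).const_mul _))
    (by fun_prop) (by fun_prop) (by fun_prop) (by fun_prop) he ce'
  -- y multiplier
  have D2 := ww_div (fun x y => y * (u x y * v x y))
    (fun x y => y * (1 / 2 * (v x y ^ 2 - u x y ^ 2)))
    (fun x y => y * (ux x y * v x y + u x y * uy x y))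
    (fun x y => 1 * (1 / 2 * (v x y ^ 2 - u x y ^ 2))
      + y * (1 / 2 * (((2:ℕ) : ℝ) * v x y ^ (2 - 1) * vy x y
        - ((2:ℕ) : ℝ) * u x y ^ (2 - 1) * uy x y)))
    e e' L h
    (fun x y => (((hux x y).mul (hvx x y)).const_mul _))
    (fun x y => (hasDerivAt_id y).mul ((((hvy x y).pow 2).sub ((huy x y).pow 2)).const_mul _))
    (by fun_prop) (by fun_prop) (by fun_prop) (by fun_prop) he ce'
  -- e multiplier
  have D3 := ww_div (fun x y => e x * (u x y * v x y))
    (fun x y => e x * (1 / 2 * (v x y ^ 2 - u x y ^ 2)))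
    (fun x y => e' x * (u x y * v x y) + e x * (ux x y * v x y + u x y * uy x y))
    (fun x y => e x * (1 / 2 * (((2:ℕ) : ℝ) * v x y ^ (2 - 1) * vy x y
        - ((2:ℕ) : ℝ) * u x y ^ (2 - 1) * uy x y)))
    e e' L h
    (fun x y => (he x).mul ((hux x y).mul (hvx x y)))
    (fun x y => (((hvy x y).pow 2).sub ((huy x y).pow 2)).const_mul _ |>.const_mul _)
    (by fun_prop) (by fun_prop) (by fun_prop) (by fun_prop) he ce'
  have congD : ∀ F G : ℝ → ℝ → ℝ, (∀ x ∈ Icc 0 L, ∀ y ∈ Icc (-h) (e x), F x y = G x y) →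
      ∫ x in (0:ℝ)..L, ∫ y in (-h)..(e x), F x y = ∫ x in (0:ℝ)..L, ∫ y in (-h)..(e x), G x y := by
    intro F G hFG
    apply intervalIntegral.integral_congr
    intro x hx
    rw [uIcc_of_le hL.le] at hx
    apply intervalIntegral.integral_congr
    intro y hy
    rw [uIcc_of_le (hle x hx)] at hy
    exact hFG x hx y hy
  have congS : ∀ F G : ℝ → ℝ, (∀ x ∈ Icc 0 L, F x = G x) →
      ∫ x in (0:ℝ)..L, F x = ∫ x in (0:ℝ)..L, G x := by
    intro F G hFG
    apply intervalIntegral.integral_congr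
    intro x hx
    rw [uIcc_of_le hL.le] at hx
    exact hFG x hx
  have congY : ∀ F G : ℝ → ℝ, ∀ c ∈ Icc 0 L, (∀ y ∈ Icc (-h) (e c), F y = G y) →
      ∫ y in (-h)..(e c), F y = ∫ y in (-h)..(e c), G y := by
    intro F G c hc hFG
    apply intervalIntegral.integral_congr
    intro y hy
    rw [uIcc_of_le (hle c hc)] at hy
    exact hFG y hy
  have m0 : (0:ℝ) ∈ Icc 0 L := ⟨le_rfl, hL.le⟩
  have mL : L ∈ Icc 0 L := ⟨hL.le, le_rfl⟩
  rw [congD _ (fun x y => -(1 / 2 * (v x y ^ 2 - u x y ^ 2))) (fun x hx y hy => by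
      have := lap x hx y hy
      push_cast
      linear_combination (x * u x y) * this),
    congS (fun x => x * (u x (e x) * v x (e x)) - e' x * (x * (1 / 2 * (u x (e x) ^ 2 - v x (e x) ^ 2))))
      (fun x => x * (u x (e x) * v x (e x)
          + 1 / 2 * e' x * (v x (e x) ^ 2 - u x (e x) ^ 2))) (fun x hx => by ring),
    congS (fun x => x * (u x (-h) * v x (-h))) (fun _ => 0) (fun x hx => by simp [bh x hx]),
    congY _ (fun y => -(L / 2) * v L y ^ 2) L mL (fun y hy => by simp only [bL y hy]; ring),
    congY _ (fun y => 0) 0 m0 (fun y hy => by simp)] at D1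
  rw [congD _ (fun x y => 1 / 2 * (v x y ^ 2 - u x y ^ 2)) (fun x hx y hy => by
      have := lap x hx y hy
      push_cast
      linear_combination (y * v x y) * this),
    congS (fun x => e x * (1 / 2 * (v x (e x) ^ 2 - u x (e x) ^ 2)) - e' x * (e x * (u x (e x) * v x (e x))))
      (fun x => e x * (1 / 2 * v x (e x) ^ 2 - 1 / 2 * u x (e x) ^ 2
          - e' x * u x (e x) * v x (e x))) (fun x hx => by ring),
    congS (fun x => -h * (1 / 2 * (v x (-h) ^ 2 - u x (-h) ^ 2)))
      (fun x => (h / 2) * u x (-h) ^ 2) (fun x hx => by simp only [bh x hx]; ring),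
    congY _ (fun y => 0) L mL (fun y hy => by simp [bL y hy]),
    congY _ (fun y => 0) 0 m0 (fun y hy => by simp [b0 y hy])] at D2
  rw [congD _ (fun x y => e' x * (u x y * v x y)) (fun x hx y hy => by
      have := lap x hx y hy
      push_cast
      linear_combination (e x * v x y) * this),
    congS (fun x => e x * (1 / 2 * (v x (e x) ^ 2 - u x (e x) ^ 2)) - e' x * (e x * (u x (e x) * v x (e x))))
      (fun x => e x * (1 / 2 * v x (e x) ^ 2 - 1 / 2 * u x (e x) ^ 2
          - e' x * u x (e x) * v x (e x))) (fun x hx => by ring),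
    congS (fun x => e x * (1 / 2 * (v x (-h) ^ 2 - u x (-h) ^ 2)))
      (fun x => (-1 / 2) * (e x * u x (-h) ^ 2)) (fun x hx => by simp only [bh x hx]; ring),
    congY _ (fun y => 0) L mL (fun y hy => by simp [bL y hy]),
    congY _ (fun y => 0) 0 m0 (fun y hy => by simp [b0 y hy])] at D3
  have hneg : ∫ x in (0:ℝ)..L, ∫ y in (-h)..(e x), -(1 / 2 * (v x y ^ 2 - u x y ^ 2))
      = - ∫ x in (0:ℝ)..L, ∫ y in (-h)..(e x), 1 / 2 * (v x y ^ 2 - u x y ^ 2) := by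
    simp only [intervalIntegral.integral_neg]
  rw [hneg] at D1
  simp only [intervalIntegral.integral_const_mul (h / 2)] at D2
  simp only [intervalIntegral.integral_const_mul (-1 / 2 : ℝ)] at D3
  rw [intervalIntegral.integral_const_mul (-(L / 2))] at D1
  simp only [intervalIntegral.integral_zero] at D1 D2 D3
  have W : 0 ≤ ∫ y in (-h)..(e L), v L y ^ 2 :=
    intervalIntegral.integral_nonneg (hle L mL) fun y _ => sq_nonneg _
  have W' : 0 ≤ L / 2 * ∫ y in (-h)..(e L), v L y ^ 2 := by positivity
  have hb : 0 ≤ ∫ x in (0:ℝ)..L, u x (-h) ^ 2 :=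
    intervalIntegral.integral_nonneg hL.le fun y _ => sq_nonneg _
  have hc : -(h / 2) * ∫ x in (0:ℝ)..L, u x (-h) ^ 2 ≤ ∫ x in (0:ℝ)..L, e x * u x (-h) ^ 2 := by
    rw [← intervalIntegral.integral_const_mul]
    apply intervalIntegral.integral_mono_on hL.le
      ((by fun_prop : Continuous _).intervalIntegrable _ _)
      ((by fun_prop : Continuous _).intervalIntegrable _ _)
    intro x hx
    have := elow x hx
    exact mul_le_mul_of_nonneg_right (by linarith) (sq_nonneg _)
  have hX : ∫ x in (0:ℝ)..L, ∫ y in (-h)..(e x), e' x * (u x y * v x y)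
      ≤ B * (1 / 2 * ∫ x in (0:ℝ)..L, ∫ y in (-h)..(e x), (u x y ^ 2 + v x y ^ 2)) := by
    rw [← mul_assoc, ← intervalIntegral.integral_const_mul]
    simp only [← intervalIntegral.integral_const_mul]
    have k1 : Continuous (fun p : ℝ × ℝ => e' p.1 * (u p.1 p.2 * v p.1 p.2)) := by fun_prop
    have k2 : Continuous (fun p : ℝ × ℝ => B * (1 / 2) * (u p.1 p.2 ^ 2 + v p.1 p.2 ^ 2)) := by
      fun_prop
    apply intervalIntegral.integral_mono_on hL.le
    · exact (intervalIntegral.continuous_parametric_intervalIntegral_of_continuous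
        (f := fun x y => e' x * (u x y * v x y)) k1 ce).intervalIntegrable _ _
    · exact (intervalIntegral.continuous_parametric_intervalIntegral_of_continuous
        (f := fun x y => B * (1 / 2) * (u x y ^ 2 + v x y ^ 2)) k2 ce).intervalIntegrable _ _
    intro x hx
    apply intervalIntegral.integral_mono_on (hle x hx)
    · exact (k1.comp (by fun_prop : Continuous fun y => (x, y))).intervalIntegrable _ _
    · exact (k2.comp (by fun_prop : Continuous fun y => (x, y))).intervalIntegrable _ _
    intro y _
    have h1 := abs_le.1 (hB x hx)
    nlinarith [mul_nonneg (by linarith [h1.2] : 0 ≤ B - e' x) (sq_nonneg (u x y + v x y)),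
      mul_nonneg (by linarith [h1.1] : 0 ≤ B + e' x) (sq_nonneg (u x y - v x y))]
  have hhb : 0 ≤ h * ∫ x in (0:ℝ)..L, u x (-h) ^ 2 := by positivity
  linarith

lemma ww_energy {L₁ h g T : ℝ} (hL : 0 < L₁) (hh : 0 < h)
    {η : ℝ → ℝ → ℝ} {ϕ : ℝ → ℝ → ℝ → ℝ} (hsol : IsWW2D L₁ h g T η ϕ) (t : ℝ)
    (ht : t ∈ Icc 0 T) : HasDerivAt (energy2D L₁ h g η ϕ) 0 t := by
  have sη : Sm2 η := hsol.smooth_eta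
  have sϕ : Sm3 ϕ := hsol.smooth_phi
  have cη := sη.cont
  have cηT := sη.sT.cont
  have cu := sϕ.sX.cont
  have cv := sϕ.sY.cont
  have cuT := sϕ.sX.sT.cont
  have cvT := sϕ.sY.sT.cont
  have cϕT := sϕ.sT.cont
  have h1 : HasDerivAt (fun s => ∫ x in (0:ℝ)..L₁, (η s x) ^ 2)
      (∫ x in (0:ℝ)..L₁, ((2:ℕ) : ℝ) * η t x ^ (2 - 1) * etaT η t x) t := by
    apply ww_param (fun s x => η s x ^ 2)
      (fun s x => ((2:ℕ) : ℝ) * η s x ^ (2 - 1) * etaT η s x)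
    · exact fun s x => (sη.hT s x).pow 2
    · intro s; have := sη.ct s; fun_prop
    · fun_prop
  let q : ℝ → ℝ → ℝ → ℝ := fun t x y => phiX ϕ t x y ^ 2 + phiY ϕ t x y ^ 2
  let q' : ℝ → ℝ → ℝ → ℝ := fun t x y =>
    ((2:ℕ) : ℝ) * phiX ϕ t x y ^ (2 - 1) * phiT (phiX ϕ) t x y
      + ((2:ℕ) : ℝ) * phiY ϕ t x y ^ (2 - 1) * phiT (phiY ϕ) t x y
  have cq : Continuous (fun p : ℝ × ℝ × ℝ => q p.1 p.2.1 p.2.2) := by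
    simp only [q]; fun_prop
  have cq' : Continuous (fun p : ℝ × ℝ × ℝ => q' p.1 p.2.1 p.2.2) := by
    simp only [q']; fun_prop
  have cI' : Continuous (fun p : ℝ × ℝ => ∫ y in (-h)..(η p.1 p.2), q' p.1 p.2 y) :=
    intervalIntegral.continuous_parametric_intervalIntegral_of_continuous
      (f := fun (p : ℝ × ℝ) y => q' p.1 p.2 y)
      (cq'.comp (by fun_prop : Continuous fun r : (ℝ × ℝ) × ℝ => (r.1.1, r.1.2, r.2))) cη
  have cqs : Continuous (fun p : ℝ × ℝ => q p.1 p.2 (η p.1 p.2)) :=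
    cq.comp (by fun_prop : Continuous fun r : ℝ × ℝ => (r.1, r.2, η r.1 r.2))
  have h2 : HasDerivAt (fun s => ∫ x in (0:ℝ)..L₁, ∫ y in (-h)..(η s x), q s x y)
      (∫ x in (0:ℝ)..L₁, (q t x (η t x) * etaT η t x + ∫ y in (-h)..(η t x), q' t x y)) t := by
    apply ww_param (fun s x => ∫ y in (-h)..(η s x), q s x y)
      (fun s x => q s x (η s x) * etaT η s x + ∫ y in (-h)..(η s x), q' s x y)
    · intro s x
      exact ww_leibniz (fun s y => q s x y) (fun s y => q' s x y) (fun s => η s x)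
        (fun s => etaT η s x) (-h)
        (fun s y => ((sϕ.sX.hT s x y).pow 2).add ((sϕ.sY.hT s x y).pow 2))
        (cq.comp (by fun_prop : Continuous fun r : ℝ × ℝ => (r.1, x, r.2)))
        (cq'.comp (by fun_prop : Continuous fun r : ℝ × ℝ => (r.1, x, r.2)))
        (fun s => sη.hT s x) s
    · intro s
      exact intervalIntegral.continuous_parametric_intervalIntegral_of_continuous
        (f := fun x y => q s x y)
        (cq.comp (by fun_prop : Continuous fun r : ℝ × ℝ => (s, r.1, r.2))) (sη.ct s)
    · exact (cqs.mul cηT).add cI'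
  have G := ww_green (fun x y => phiT ϕ t x y) (fun x y => phiX (phiT ϕ) t x y)
    (fun x y => phiY (phiT ϕ) t x y) (fun x y => phiX ϕ t x y) (fun x y => phiY ϕ t x y)
    (fun x y => phiX (phiX ϕ) t x y) (fun x y => phiY (phiY ϕ) t x y) (fun x => η t x)
    (fun x => etaX η t x) L₁ h hL hh (fun x y => sϕ.sT.hX t x y) (fun x y => sϕ.sT.hY t x y)
    (fun x y => sϕ.sX.hX t x y) (fun x y => sϕ.sY.hY t x y) (sϕ.sT.ct t) (sϕ.sT.sX.ct t)
    (sϕ.sT.sY.ct t) (sϕ.sX.ct t) (sϕ.sY.ct t) (sϕ.sX.sX.ct t) (sϕ.sY.sY.ct t)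
    (fun x => sη.hX t x) (sη.sX.ct t) (hsol.eta_lower t ht) (hsol.laplace t ht)
    (hsol.bc_left t ht) (hsol.bc_right t ht) (hsol.bc_bottom t ht)
  have h3 := (h1.const_mul (g / 2)).add (h2.const_mul (1 / 2))
  refine h3.congr_deriv ?_
  have cη1 := sη.ct t
  have cηT1 := sη.sT.ct t
  have cϕs : Continuous (fun x => phiT ϕ t x (η t x)) :=
    cϕT.comp (by fun_prop : Continuous fun x => (t, x, η t x))
  have cqs1 : Continuous (fun x => q t x (η t x)) :=
    cqs.comp (by fun_prop : Continuous fun x => (t, x))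
  have cI1 : Continuous (fun x => ∫ y in (-h)..(η t x), q' t x y) :=
    cI'.comp (by fun_prop : Continuous fun x => (t, x))
  have e1 : ∫ x in (0:ℝ)..L₁, ∫ y in (-h)..(η t x), q' t x y
      = 2 * ∫ x in (0:ℝ)..L₁, phiT ϕ t x (η t x) * etaT η t x := by
    have e2 : ∫ x in (0:ℝ)..L₁, phiT ϕ t x (η t x) * etaT η t x
        = ∫ x in (0:ℝ)..L₁, phiT ϕ t x (η t x)
          * (phiY ϕ t x (η t x) - etaX η t x * phiX ϕ t x (η t x)) := by
      apply intervalIntegral.integral_congr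
      intro x hx
      rw [uIcc_of_le hL.le] at hx
      simp only [hsol.kinematic t ht x hx]
    rw [e2, ← G]
    simp only [← intervalIntegral.integral_const_mul]
    apply intervalIntegral.integral_congr
    intro x _
    apply intervalIntegral.integral_congr
    intro y _
    simp only [q', sϕ.TX, sϕ.TY]
    push_cast
    ring
  have cqe : Continuous (fun x => q t x (η t x) * etaT η t x) := cqs1.mul cηT1
  rw [intervalIntegral.integral_add (cqe.intervalIntegrable _ _)
    (cI1.intervalIntegrable _ _), e1, mul_add, ← mul_assoc,
    ← intervalIntegral.integral_const_mul, ← intervalIntegral.integral_const_mul,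
    ← intervalIntegral.integral_const_mul,
    ← intervalIntegral.integral_add ((by fun_prop : Continuous _).intervalIntegrable _ _)
      ((by fun_prop : Continuous _).intervalIntegrable _ _),
    ← intervalIntegral.integral_add ((by fun_prop : Continuous _).intervalIntegrable _ _)
      ((by fun_prop : Continuous _).intervalIntegrable _ _),
    intervalIntegral.integral_congr (g := fun _ => (0:ℝ))]
  · simp
  · intro x hx
    rw [uIcc_of_le hL.le] at hx
    have := hsol.bernoulli t ht x hx
    simp only [q]
    push_cast
    linear_combination (etaT η t x) * this

lemma ww_lin (F d1 d2 s1 s2 s3 s4 : ℝ → ℝ) (g L : ℝ) (hL : 0 ≤ L) 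
    (c1 : Continuous d1) (c2 : Continuous d2) (k1 : Continuous s1) (k2 : Continuous s2)
    (k3 : Continuous s3) (k4 : Continuous s4)
    (hh : ∀ x ∈ Icc 0 L, F x = d1 x + g * d2 x + s1 x - 3 / 4 * s2 x + g / 4 * s3 x + 1 / 4 * s4 x) :
    ∫ x in (0:ℝ)..L, F x = (∫ x in (0:ℝ)..L, d1 x) + g * (∫ x in (0:ℝ)..L, d2 x)
      + (∫ x in (0:ℝ)..L, s1 x) - 3 / 4 * (∫ x in (0:ℝ)..L, s2 x)
      + g / 4 * (∫ x in (0:ℝ)..L, s3 x) + 1 / 4 * (∫ x in (0:ℝ)..L, s4 x) := by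
  simp only [← intervalIntegral.integral_const_mul]
  rw [← intervalIntegral.integral_add ((by fun_prop : Continuous _).intervalIntegrable _ _)
      ((by fun_prop : Continuous _).intervalIntegrable _ _),
    ← intervalIntegral.integral_add ((by fun_prop : Continuous _).intervalIntegrable _ _)
      ((by fun_prop : Continuous _).intervalIntegrable _ _),
    ← intervalIntegral.integral_sub ((by fun_prop : Continuous _).intervalIntegrable _ _)
      ((by fun_prop : Continuous _).intervalIntegrable _ _),
    ← intervalIntegral.integral_add ((by fun_prop : Continuous _).intervalIntegrable _ _)
      ((by fun_prop : Continuous _).intervalIntegrable _ _),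
    ← intervalIntegral.integral_add ((by fun_prop : Continuous _).intervalIntegrable _ _)
      ((by fun_prop : Continuous _).intervalIntegrable _ _)]
  apply intervalIntegral.integral_congr
  intro x hx
  rw [uIcc_of_le hL] at hx
  exact hh x hx

/-- the multiplier functional -/
def wwM (L₁ : ℝ) (η : ℝ → ℝ → ℝ) (ϕ : ℝ → ℝ → ℝ → ℝ) (t : ℝ) : ℝ :=
  ∫ x in (0:ℝ)..L₁, (x * (η t x * etaX (psi η ϕ) t x) + 1 / 4 * (η t x * psi η ϕ t x))

lemma ww_mom {L₁ h g T B : ℝ} (hL : 0 < L₁) (hh : 0 < h) (hg : 0 < g) (hB0 : 0 < B)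
    {η : ℝ → ℝ → ℝ} {ϕ : ℝ → ℝ → ℝ → ℝ} (hsol : IsWW2D L₁ h g T η ϕ) (t : ℝ)
    (ht : t ∈ Icc 0 T) (hB : ∀ x ∈ Icc (0:ℝ) L₁, |etaX η t x| ≤ B) (hm : η t L₁ = 0) :
    ∃ m, HasDerivAt (wwM L₁ η ϕ) m t ∧ (2 - 7 * B) / 4 * energy2D L₁ h g η ϕ t ≤ m := by
  have sη : Sm2 η := hsol.smooth_eta
  have sϕ : Sm3 ϕ := hsol.smooth_phi
  have sp : Sm2 (psi η ϕ) := sη.psi sϕ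
  set p := psi η ϕ with hp
  have pX : ∀ x, etaX p t x = phiX ϕ t x (η t x) + etaX η t x * phiY ϕ t x (η t x) := by
    intro x
    have := sϕ.chain (fun _ => t) (fun s => s) (fun s => η t s) 0 1 (etaX η t x) x
      (hasDerivAt_const _ _) (hasDerivAt_id x) (sη.hX t x)
    have h2 := this.deriv
    rw [zero_mul, one_mul, zero_add] at h2
    exact h2
  have pT : ∀ x, etaT p t x = phiT ϕ t x (η t x) + etaT η t x * phiY ϕ t x (η t x) := by
    intro x
    have := sϕ.chain (fun s => s) (fun _ => x) (fun s => η s x) 1 0 (etaT η t x) t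
      (hasDerivAt_id t) (hasDerivAt_const _ _) (sη.hT t x)
    have h2 := this.deriv
    rw [zero_mul, one_mul, add_zero] at h2
    exact h2
  have c1 := sη.cont
  have c2 := sη.sT.cont
  have c3 := sp.cont
  have c4 := sp.sX.cont
  have c5 := sp.sT.cont
  have c6 := sp.sX.sT.cont
  have D : HasDerivAt (wwM L₁ η ϕ) (∫ x in (0:ℝ)..L₁,
      (x * (etaT η t x * etaX p t x + η t x * etaT (etaX p) t x)
        + 1 / 4 * (etaT η t x * p t x + η t x * etaT p t x))) t := by
    apply ww_param (fun s x => x * (η s x * etaX p s x) + 1 / 4 * (η s x * p s x))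
      (fun s x => x * (etaT η s x * etaX p s x + η s x * etaT (etaX p) s x)
        + 1 / 4 * (etaT η s x * p s x + η s x * etaT p s x))
    · intro s x
      exact (((sη.hT s x).mul (sp.sX.hT s x)).const_mul x).add
        (((sη.hT s x).mul (sp.hT s x)).const_mul (1 / 4))
    · intro s
      have := sη.ct s
      have := sp.ct s
      have := sp.sX.ct s
      fun_prop
    · fun_prop
  refine ⟨_, D, ?_⟩
  have k1 := sη.ct t
  have k2 := sη.sT.ct t
  have k3 := sη.sX.ct t
  have k4 := sp.ct t
  have k5 := sp.sT.ct t
  have k6 := sp.sX.ct t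
  have k7 := sp.sX.sT.ct t
  have k8 := sp.sT.sX.ct t
  have cu : Continuous (fun x => phiX ϕ t x (η t x)) :=
    sϕ.sX.cont.comp (by fun_prop : Continuous fun x => (t, x, η t x))
  have cv : Continuous (fun x => phiY ϕ t x (η t x)) :=
    sϕ.sY.cont.comp (by fun_prop : Continuous fun x => (t, x, η t x))
  have z1 : ∫ x in (0:ℝ)..L₁, (1 * (η t x * etaT p t x)
      + x * (etaX η t x * etaT p t x + η t x * etaX (etaT p) t x)) = 0 := by
    rw [intervalIntegral.integral_eq_sub_of_hasDerivAt (f := fun x => x * (η t x * etaT p t x))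
      (fun x _ => (hasDerivAt_id' x).mul ((sη.hX t x).mul (sp.sT.hX t x)))
      ((by fun_prop : Continuous _).intervalIntegrable _ _)]
    simp [hm]
  have z2 : ∫ x in (0:ℝ)..L₁, (1 * (η t x * (1 / 2 * η t x))
      + x * (etaX η t x * (1 / 2 * η t x) + η t x * (1 / 2 * etaX η t x))) = 0 := by
    rw [intervalIntegral.integral_eq_sub_of_hasDerivAt (f := fun x => x * (η t x * (1 / 2 * η t x)))
      (fun x _ => (hasDerivAt_id' x).mul ((sη.hX t x).mul ((sη.hX t x).const_mul (1 / 2))))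
      ((by fun_prop : Continuous _).intervalIntegrable _ _)]
    simp [hm]
  have G := ww_green (fun x y => ϕ t x y) (fun x y => phiX ϕ t x y)
    (fun x y => phiY ϕ t x y) (fun x y => phiX ϕ t x y) (fun x y => phiY ϕ t x y)
    (fun x y => phiX (phiX ϕ) t x y) (fun x y => phiY (phiY ϕ) t x y) (fun x => η t x)
    (fun x => etaX η t x) L₁ h hL hh (fun x y => sϕ.hX t x y) (fun x y => sϕ.hY t x y)
    (fun x y => sϕ.sX.hX t x y) (fun x y => sϕ.sY.hY t x y) (sϕ.ct t) (sϕ.sX.ct t)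
    (sϕ.sY.ct t) (sϕ.sX.ct t) (sϕ.sY.ct t) (sϕ.sX.sX.ct t) (sϕ.sY.sY.ct t)
    (fun x => sη.hX t x) (sη.sX.ct t) (hsol.eta_lower t ht) (hsol.laplace t ht)
    (hsol.bc_left t ht) (hsol.bc_right t ht) (hsol.bc_bottom t ht)
  have Po := ww_pohozaev (fun x y => phiX ϕ t x y) (fun x y => phiY ϕ t x y)
    (fun x y => phiX (phiX ϕ) t x y) (fun x y => phiY (phiX ϕ) t x y)
    (fun x y => phiY (phiY ϕ) t x y) (fun x => η t x)
    (fun x => etaX η t x) L₁ h B hL hh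
    (fun x y => sϕ.sX.hX t x y) (fun x y => sϕ.sX.hY t x y)
    (fun x y => by have := sϕ.sY.hX t x y; rwa [sϕ.XY] at this)
    (fun x y => sϕ.sY.hY t x y) (sϕ.sX.ct t) (sϕ.sY.ct t) (sϕ.sX.sX.ct t) (sϕ.sX.sY.ct t)
    (sϕ.sY.sY.ct t)
    (fun x => sη.hX t x) (sη.sX.ct t) (hsol.eta_lower t ht) (hsol.laplace t ht)
    (hsol.bc_left t ht) (hsol.bc_right t ht) (hsol.bc_bottom t ht) hB
  have Lin := ww_lin
    (fun x => x * (etaT η t x * etaX p t x + η t x * etaT (etaX p) t x)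
        + 1 / 4 * (etaT η t x * p t x + η t x * etaT p t x))
    (fun x => 1 * (η t x * etaT p t x)
      + x * (etaX η t x * etaT p t x + η t x * etaX (etaT p) t x))
    (fun x => 1 * (η t x * (1 / 2 * η t x))
      + x * (etaX η t x * (1 / 2 * η t x) + η t x * (1 / 2 * etaX η t x)))
    (fun x => x * (phiX ϕ t x (η t x) * phiY ϕ t x (η t x)
          + 1 / 2 * etaX η t x * (phiY ϕ t x (η t x) ^ 2 - phiX ϕ t x (η t x) ^ 2)))
    (fun x => η t x * (1 / 2 * phiY ϕ t x (η t x) ^ 2 - 1 / 2 * phiX ϕ t x (η t x) ^ 2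
          - etaX η t x * phiX ϕ t x (η t x) * phiY ϕ t x (η t x)))
    (fun x => η t x ^ 2)
    (fun x => p t x * (phiY ϕ t x (η t x) - etaX η t x * phiX ϕ t x (η t x)))
    g L₁ hL.le (by fun_prop) (by fun_prop) (by fun_prop) (by fun_prop)
    (by fun_prop) (by fun_prop) (by
      intro x hx
      have b1 := hsol.bernoulli t ht x hx
      have b2 := hsol.kinematic t ht x hx
      have b3 : phiT ϕ t x (η t x) = -(1 / 2 * ((phiX ϕ t x (η t x)) ^ 2
        + (phiY ϕ t x (η t x)) ^ 2) + g * η t x) := by linarith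
      simp only [sp.TX, pX, pT, b3, b2]
      ring)
  rw [z1, z2] at Lin
  rw [Lin]
  have G2 : ∫ x in (0:ℝ)..L₁, p t x * (phiY ϕ t x (η t x) - etaX η t x * phiX ϕ t x (η t x))
      = ∫ x in (0:ℝ)..L₁, ∫ y in (-h)..(η t x), (phiX ϕ t x y ^ 2 + phiY ϕ t x y ^ 2) := by
    simp only [sq]
    exact G.symm
  rw [G2]
  unfold energy2D
  have p1 : 0 ≤ ∫ x in (0:ℝ)..L₁, η t x ^ 2 :=
    intervalIntegral.integral_nonneg hL.le fun y _ => sq_nonneg _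
  have p2 : 0 ≤ B * (g * ∫ x in (0:ℝ)..L₁, η t x ^ 2) := by positivity
  linarith

lemma ww_bound (e p p' : ℝ → ℝ) (L : ℝ) (hL : 0 < L) (ce : Continuous e) (cp' : Continuous p')
    (hp : ∀ x, HasDerivAt p (p' x) x) (he : ∫ x in (0:ℝ)..L, e x = 0) :
    |∫ x in (0:ℝ)..L, (x * (e x * p' x) + 1 / 4 * (e x * p x))|
      ≤ 5 / 4 * L * (Real.sqrt (∫ x in (0:ℝ)..L, e x ^ 2)
        * Real.sqrt (∫ x in (0:ℝ)..L, p' x ^ 2)) := by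
  have cp : Continuous p := continuous_iff_continuousAt.2 fun t => (hp t).continuousAt
  set C := ∫ x in (0:ℝ)..L, |p' x| with hC
  have hC0 : 0 ≤ C := intervalIntegral.integral_nonneg hL.le fun y _ => abs_nonneg _
  have hosc : ∀ x ∈ Icc 0 L, |p x - p 0| ≤ C := by
    intro x hx
    rw [← intervalIntegral.integral_eq_sub_of_hasDerivAt (fun y _ => hp y)
      (cp'.intervalIntegrable _ _)]
    refine (intervalIntegral.abs_integral_le_integral_abs hx.1).trans ?_
    exact intervalIntegral.integral_mono_interval le_rfl hx.1 hx.2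
      (Filter.Eventually.of_forall fun y => abs_nonneg _) (cp'.abs.intervalIntegrable _ _)
  have e1 : ∫ x in (0:ℝ)..L, (x * (e x * p' x) + 1 / 4 * (e x * p x))
      = ∫ x in (0:ℝ)..L, (x * (e x * p' x) + 1 / 4 * (e x * (p x - p 0))) := by
    have : ∀ x, x * (e x * p' x) + 1 / 4 * (e x * p x)
        = (x * (e x * p' x) + 1 / 4 * (e x * (p x - p 0))) + (1 / 4 * p 0) * e x := by
      intro x; ring
    simp only [this]
    rw [intervalIntegral.integral_add ((by fun_prop : Continuous _).intervalIntegrable _ _)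
      ((by fun_prop : Continuous _).intervalIntegrable _ _),
      intervalIntegral.integral_const_mul, he]
    simp
  have e2 : |∫ x in (0:ℝ)..L, (x * (e x * p' x) + 1 / 4 * (e x * (p x - p 0)))|
      ≤ ∫ x in (0:ℝ)..L, (L * (|e x| * |p' x|) + (1 / 4 * C) * |e x|) := by
    refine (intervalIntegral.abs_integral_le_integral_abs hL.le).trans ?_
    apply intervalIntegral.integral_mono_on hL.le
      ((by fun_prop : Continuous _).intervalIntegrable _ _)
      ((by fun_prop : Continuous _).intervalIntegrable _ _)
    intro x hx
    refine (abs_add_le _ _).trans ?_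
    have a1 : |x * (e x * p' x)| ≤ L * (|e x| * |p' x|) := by
      rw [abs_mul, abs_mul, abs_of_nonneg hx.1]
      exact mul_le_mul_of_nonneg_right hx.2 (by positivity)
    have a2 : |1 / 4 * (e x * (p x - p 0))| ≤ (1 / 4 * C) * |e x| := by
      rw [abs_mul, abs_mul, abs_of_nonneg (by norm_num : (0:ℝ) ≤ 1 / 4)]
      have := mul_le_mul_of_nonneg_left (hosc x hx) (abs_nonneg (e x))
      linarith
    linarith
  have e3 : ∫ x in (0:ℝ)..L, (L * (|e x| * |p' x|) + (1 / 4 * C) * |e x|)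
      = L * (∫ x in (0:ℝ)..L, |e x| * |p' x|) + (1 / 4 * C) * ∫ x in (0:ℝ)..L, |e x| := by
    rw [intervalIntegral.integral_add ((by fun_prop : Continuous _).intervalIntegrable _ _)
      ((by fun_prop : Continuous _).intervalIntegrable _ _),
      intervalIntegral.integral_const_mul, intervalIntegral.integral_const_mul]
  rw [e3] at e2
  have s1 := ww_cs e p' ce cp' L hL.le
  have s2 := ww_cs (fun _ => 1) p' continuous_const cp' L hL.le
  have s3 := ww_cs (fun _ => 1) e continuous_const ce L hL.le
  simp only [abs_one, one_mul, one_pow, intervalIntegral.integral_const, sub_zero,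
    smul_eq_mul, mul_one] at s2 s3
  rw [e1]
  refine e2.trans ?_
  set a := Real.sqrt (∫ x in (0:ℝ)..L, e x ^ 2)
  set b := Real.sqrt (∫ x in (0:ℝ)..L, p' x ^ 2)
  have hI : 0 ≤ ∫ x in (0:ℝ)..L, |e x| :=
    intervalIntegral.integral_nonneg hL.le fun y _ => abs_nonneg _
  have hb : 0 ≤ b := Real.sqrt_nonneg _
  have s4 : C * (∫ x in (0:ℝ)..L, |e x|) ≤ (Real.sqrt L * b) * (Real.sqrt L * a) :=
    mul_le_mul s2 s3 hI (by positivity)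
  have s5 : (Real.sqrt L * b) * (Real.sqrt L * a) = L * (a * b) := by
    have := Real.mul_self_sqrt hL.le
    linear_combination (a * b) * this
  have s6 := mul_le_mul_of_nonneg_left s1 hL.le
  linarith

/-- unique continuation.  Under the hypotheses of Corollary 1.4,
if the contact point does not move (`η(t,L₁) = 0` for all `t`) then the energy
vanishes, and hence `η ≡ 0` and the velocity `∇_{x,y}ϕ ≡ 0` in the fluid domain. -/
theorem unique_continuation_2d
    (L₁ h g T : ℝ) (hL : 0 < L₁) (hh : 0 < h) (hg : 0 < g) (hT0 : 0 < T)
    (η : ℝ → ℝ → ℝ) (ϕ : ℝ → ℝ → ℝ → ℝ) (hsol : IsWW2D L₁ h g T η ϕ)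
    (A B : ℝ) (hA : 0 < A) (hB : 0 < B) (hB7 : B < 2 / 7)
    (hT : T ≥ 4 / (2 - 7 * B) * (1 + 5 * L₁ * A / Real.sqrt g))
    (hslope : ∀ t ∈ Icc (0:ℝ) T, ∀ x ∈ Icc (0:ℝ) L₁, |etaX η t x| ≤ B)
    (hpsiL2 : ∀ t ∈ Icc (0:ℝ) T,
      Real.sqrt (∫ x in (0:ℝ)..L₁, (psiX η ϕ t x) ^ 2)
        ≤ A * Real.sqrt (2 * energy2D L₁ h g η ϕ 0))
    (hm : ∀ t ∈ Icc (0:ℝ) T, η t L₁ = 0) :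
    energy2D L₁ h g η ϕ 0 = 0
    ∧ (∀ t ∈ Icc (0:ℝ) T, ∀ x ∈ Icc (0:ℝ) L₁,
        η t x = 0
        ∧ ∀ y ∈ Icc (-h) (η t x), phiX ϕ t x y = 0 ∧ phiY ϕ t x y = 0) := by
  have sη : Sm2 η := hsol.smooth_eta
  have sϕ : Sm3 ϕ := hsol.smooth_phi
  have sp : Sm2 (psi η ϕ) := sη.psi sϕ
  have m0 : (0:ℝ) ∈ Icc 0 T := ⟨le_rfl, hT0.le⟩
  have mT : T ∈ Icc 0 T := ⟨hT0.le, le_rfl⟩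
  have hle : ∀ t ∈ Icc (0:ℝ) T, ∀ x ∈ Icc 0 L₁, -h < η t x := fun t ht x hx => by
    linarith [hsol.eta_lower t ht x hx]
  set H := energy2D L₁ h g η ϕ 0 with hH
  have cons : ∀ t ∈ Icc (0:ℝ) T, energy2D L₁ h g η ϕ t = H := by
    apply constant_of_has_deriv_right_zero
    · intro t ht
      exact (ww_energy hL hh hsol t ht).continuousAt.continuousWithinAt
    · intro t ht
      exact (ww_energy hL hh hsol t (Ico_subset_Icc_self ht)).hasDerivWithinAt
  have P1 : ∀ t, 0 ≤ ∫ x in (0:ℝ)..L₁, η t x ^ 2 := fun t =>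
    intervalIntegral.integral_nonneg hL.le fun y _ => sq_nonneg _
  have I0 : ∀ t ∈ Icc (0:ℝ) T, ∀ x ∈ Icc 0 L₁,
      0 ≤ ∫ y in (-h)..(η t x), ((phiX ϕ t x y) ^ 2 + (phiY ϕ t x y) ^ 2) := fun t ht x hx =>
    intervalIntegral.integral_nonneg (hle t ht x hx).le fun y _ => by positivity
  have P2 : ∀ t ∈ Icc (0:ℝ) T, 0 ≤ ∫ x in (0:ℝ)..L₁, ∫ y in (-h)..(η t x),
      ((phiX ϕ t x y) ^ 2 + (phiY ϕ t x y) ^ 2) := fun t ht =>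
    intervalIntegral.integral_nonneg hL.le fun x hx => I0 t ht x hx
  have Heta : ∀ t ∈ Icc (0:ℝ) T, g / 2 * (∫ x in (0:ℝ)..L₁, η t x ^ 2) ≤ H := by
    intro t ht
    have h1 := cons t ht
    unfold energy2D at h1
    linarith [P2 t ht]
  have H0 : 0 ≤ H := le_trans (mul_nonneg (by linarith) (P1 0)) (Heta 0 m0)
  have hsg : 0 < Real.sqrt g := Real.sqrt_pos.2 hg
  -- bound on the multiplier functional
  have bM : ∀ t ∈ Icc (0:ℝ) T, |wwM L₁ η ϕ t| ≤ 5 / 2 * (L₁ * A / Real.sqrt g) * H := by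
    intro t ht
    have b1 := ww_bound (fun x => η t x) (fun x => psi η ϕ t x) (fun x => etaX (psi η ϕ) t x) L₁
      hL (sη.ct t) (sp.sX.ct t) (fun x => sp.hX t x) (hsol.eta_mean t ht)
    have b2 : Real.sqrt (∫ x in (0:ℝ)..L₁, (etaX (psi η ϕ) t x) ^ 2)
        ≤ A * Real.sqrt (2 * H) := hpsiL2 t ht
    have b3 : Real.sqrt (∫ x in (0:ℝ)..L₁, η t x ^ 2) ≤ Real.sqrt (2 * H) / Real.sqrt g := by
      rw [← Real.sqrt_div (by linarith)]
      apply Real.sqrt_le_sqrt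
      rw [le_div_iff₀ hg]
      linarith [Heta t ht]
    have b4 := mul_le_mul b3 b2 (Real.sqrt_nonneg _) (by positivity)
    have b5 : Real.sqrt (2 * H) / Real.sqrt g * (A * Real.sqrt (2 * H))
        = 2 * (A / Real.sqrt g) * H := by
      have := Real.mul_self_sqrt (by linarith : 0 ≤ 2 * H)
      field_simp
      linear_combination this
    rw [b5] at b4
    refine b1.trans ((mul_le_mul_of_nonneg_left b4 (by positivity)).trans (le_of_eq ?_))
    ring
  have mono : (2 - 7 * B) / 4 * H * (T - 0) ≤ wwM L₁ η ϕ T - wwM L₁ η ϕ 0 := by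
    have hd : ∀ t ∈ Icc (0:ℝ) T, ∃ m, HasDerivAt (wwM L₁ η ϕ) m t ∧ (2 - 7 * B) / 4 * H ≤ m := by
      intro t ht
      have := ww_mom hL hh hg hB hsol t ht (hslope t ht) (hm t ht)
      rwa [cons t ht] at this
    apply (convex_Icc (0:ℝ) T).mul_sub_le_image_sub_of_le_deriv _ _ _ 0 m0 T mT hT0.le
    · intro t ht
      obtain ⟨m, h1, _⟩ := hd t ht
      exact h1.continuousAt.continuousWithinAt
    · intro t ht
      obtain ⟨m, h1, _⟩ := hd t (interior_subset ht)
      exact h1.differentiableAt.differentiableWithinAt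
    · intro t ht
      obtain ⟨m, h1, h2⟩ := hd t (interior_subset ht)
      rw [h1.deriv]
      exact h2
  have HZ : H = 0 := by
    have hpos : 0 < 2 - 7 * B := by linarith
    have q1 : 1 + 5 * L₁ * A / Real.sqrt g ≤ (2 - 7 * B) / 4 * T := by
      have := mul_le_mul_of_nonneg_left hT (by linarith : 0 ≤ (2 - 7 * B) / 4)
      refine le_trans (le_of_eq ?_) this
      field_simp
    have q2 := mul_le_mul_of_nonneg_right q1 H0
    have q3 := (abs_le.1 (bM T mT)).2
    have q4 := (abs_le.1 (bM 0 m0)).1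
    have q5 : 5 * L₁ * A / Real.sqrt g = 5 * (L₁ * A / Real.sqrt g) := by ring
    rw [q5] at q2
    linarith
  refine ⟨HZ, fun t ht => ?_⟩
  have E := cons t ht
  rw [HZ] at E
  unfold energy2D at E
  have p1 := P1 t
  have p2 := P2 t ht
  have z1 : ∫ x in (0:ℝ)..L₁, η t x ^ 2 = 0 := by
    have : 0 ≤ g / 2 * ∫ x in (0:ℝ)..L₁, η t x ^ 2 := by positivity
    have h3 : g / 2 * ∫ x in (0:ℝ)..L₁, η t x ^ 2 = 0 := by linarith
    rcases mul_eq_zero.1 h3 with h4 | h4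
    · linarith
    · exact h4
  have z2 : ∫ x in (0:ℝ)..L₁, ∫ y in (-h)..(η t x),
      ((phiX ϕ t x y) ^ 2 + (phiY ϕ t x y) ^ 2) = 0 := by
    rw [z1] at E; linarith
  have cq : Continuous (fun p : ℝ × ℝ => (phiX ϕ t p.1 p.2) ^ 2 + (phiY ϕ t p.1 p.2) ^ 2) := by
    have := sϕ.sX.ct t
    have := sϕ.sY.ct t
    fun_prop
  intro x hx
  constructor
  · have := ww_zero (fun x => η t x ^ 2) 0 L₁ hL (by have := sη.ct t; fun_prop)
      (fun x _ => sq_nonneg _) z1 x hx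
    exact pow_eq_zero_iff (two_ne_zero) |>.1 this
  · intro y hy
    have w1 := ww_zero _ 0 L₁ hL
      (intervalIntegral.continuous_parametric_intervalIntegral_of_continuous
        (f := fun x y => (phiX ϕ t x y) ^ 2 + (phiY ϕ t x y) ^ 2) cq (sη.ct t))
      (I0 t ht) z2 x hx
    have w2 := ww_zero _ (-h) (η t x) (hle t ht x hx)
      (cq.comp (by fun_prop : Continuous fun y => (x, y))) (fun y _ => by
        simp only [Function.comp]; positivity) w1 y hy
    simp only [Function.comp] at w2
    constructor
    · exact pow_eq_zero_iff (two_ne_zero) |>.1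
        (by nlinarith [sq_nonneg (phiX ϕ t x y), sq_nonneg (phiY ϕ t x y)] :
          phiX ϕ t x y ^ 2 = 0)
    · exact pow_eq_zero_iff (two_ne_zero) |>.1
        (by nlinarith [sq_nonneg (phiX ϕ t x y), sq_nonneg (phiY ϕ t x y)] :
          phiY ϕ t x y ^ 2 = 0)
end
end
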